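/- arXiv:2106.15358 — 2 statements merged into one kernel-verified Lean document; each statement's English description precedes it below -/
import Mathlib

section
/- Let G : B_2^k(r) → ℝ^n be an L-Lipschitz function, let x ∈ ℝ^n, let A ∈ ℝ^{m×n} have i.i.d. standard normal entries, and let y = |Ax| + η for a noise vector η ∈ ℝ^m. Let p be a point of Range(G) closest to x in the ℓ₂ norm, and let q ∈ Range(G) satisfy ‖y − |Aq|‖₂² ≤ min_{w ∈ Range(G)} ‖y − |Aw|‖₂² + τ for some τ > 0. Then for any δ > 0 there exist universal constants C, c, C' > 0 such that if m ≥ C k log(Lr/δ), then with probability at least 1 − e^{−c m} over the draw of A, min{‖q − x‖₂, ‖q + x‖₂} ≤ C' (‖p − x‖₂ + (‖η‖₂ + √τ)/√m + δ). -/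
open MeasureTheory ProbabilityTheory Matrix

/-- The squared-sum Euclidean (ℓ₂) norm of a vector in `Fin d → ℝ`. -/
noncomputable def l2norm {d : ℕ} (v : Fin d → ℝ) : ℝ := Real.sqrt (∑ i, (v i) ^ 2)

/-- `A : Ω → ℝ^{m×n}` (given through its rows) has i.i.d. standard normal entries. -/
def IIDStdGaussian {Ω : Type} [MeasurableSpace Ω] (P : Measure Ω) (m n : ℕ)
    (A : Ω → Fin m → Fin n → ℝ) : Prop :=
  Measure.map A P = Measure.pi fun _ : Fin m => Measure.pi fun _ : Fin n => gaussianReal 0 1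

/-- Membership in `Range(G) = {G(z) : z ∈ B₂ᵏ(r)}`. -/
def InRange {k n : ℕ} (G : (Fin k → ℝ) → Fin n → ℝ) (r : ℝ) (w : Fin n → ℝ) : Prop :=
  ∃ z : Fin k → ℝ, l2norm z ≤ r ∧ G z = w

/-!
If `log (L * r / δ) < 1`, then `Range(G)` has diameter `O(δ)` and there is nothing to prove.
Otherwise let `W i` be a `δ / 2 ^ i`-net of `Range(G)`; by volume comparison its log-cardinality is
at most `(i + 3) * m` once `k * log (L * r / δ) ≤ m`. For a fixed `w`, an entry of `|Ax| - |Aw|` is,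
up to sign, an entry of `A (x - w)` or of `A (x + w)`, so a small-ball estimate shows that
`‖|Ax| - |Aw|‖` is rarely much below `√m * min ‖x - w‖ ‖x + w‖`; a union bound makes this uniform
over `W 0`. The error made in passing from `q` to its nearest point `w₀` of `W 0` is controlled by
chaining: at level `i` the allowed stretching factor `8 * (i + 1) * √m` has failure exponent of
order `(i + 1) ^ 2 * m`, which beats the entropy `(2 * i + 7) * m` of the pairs of net points, while
`∑ (i + 1) / 2 ^ i` converges, so `‖A (w₀ - q)‖ ≲ √m * δ`. On the resulting event, the comparison of
the losses of `q` and `p` gives the bound deterministically, for all noises and all `q` at once.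
-/

section Gaussian

open scoped NNReal

lemma integral_exp_mul_sq_gaussianReal (v : ℝ≥0) {c : ℝ} (hc : 2 * c * v < 1) :
    ∫ x, Real.exp (c * x ^ 2) ∂gaussianReal 0 v = (√(1 - 2 * c * v))⁻¹ := by
  rcases eq_or_ne v 0 with rfl | hv
  · simp
  have hdensity : ∀ x : ℝ, gaussianPDFReal 0 v x • Real.exp (c * x ^ 2) =
      (√(2 * Real.pi * v))⁻¹ * Real.exp (-((1 - 2 * c * v) / (2 * v)) * x ^ 2) := by
    intro x
    simp only [gaussianPDFReal, smul_eq_mul, mul_assoc, ← Real.exp_add]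
    congr 2
    field_simp
    ring
  simp_rw [integral_gaussianReal_eq_integral_smul hv, hdensity]
  rw [integral_const_mul, integral_gaussian, ← Real.sqrt_inv, ← Real.sqrt_inv,
    ← Real.sqrt_mul (by positivity)]
  congr 1
  have := Real.pi_pos
  have : 1 - 2 * c * v ≠ 0 := by linarith
  field_simp

variable {F : Type*} [NormedAddCommGroup F] [InnerProductSpace ℝ F] [FiniteDimensional ℝ F]
  [MeasurableSpace F] [BorelSpace F]

lemma map_inner_stdGaussian (u : F) :
    (stdGaussian F).map (fun a ↦ inner ℝ a u) = gaussianReal 0 (‖u‖₊ ^ 2) := by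
  have hdual : (fun a ↦ inner ℝ a u) = innerSL ℝ u := by
    ext a
    exact real_inner_comm u a
  rw [hdual, IsGaussian.map_eq_gaussianReal, integral_strongDual_stdGaussian,
    variance_dual_stdGaussian, innerSL_apply_norm]
  congr 1
  ext
  simp

lemma mgf_inner_sq_stdGaussian (u : F) {t : ℝ} (ht : 2 * t * ‖u‖ ^ 2 < 1) :
    mgf (fun a ↦ inner ℝ a u ^ 2) (stdGaussian F) t = (√(1 - 2 * t * ‖u‖ ^ 2))⁻¹ := by
  have hlaw := integral_exp_mul_sq_gaussianReal (‖u‖₊ ^ 2) (c := t) (by simpa using ht)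
  rw [← map_inner_stdGaussian, integral_map (by fun_prop) (by fun_prop)] at hlaw
  simpa [mgf] using hlaw

lemma integrable_exp_mul_inner_sq_stdGaussian (u : F) {t : ℝ} (ht : 2 * t * ‖u‖ ^ 2 < 1) :
    Integrable (fun a ↦ Real.exp (t * inner ℝ a u ^ 2)) (stdGaussian F) := by
  refine Integrable.of_integral_ne_zero ?_
  have hmgf := mgf_inner_sq_stdGaussian u ht
  rw [mgf] at hmgf
  rw [hmgf]
  have : 0 < 1 - 2 * t * ‖u‖ ^ 2 := by linarith
  positivity

end Gaussian

section Chernoff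

variable {ι X : Type*} [Fintype ι] [MeasurableSpace X] {μ : Measure X} [IsProbabilityMeasure μ]
  {f : X → ℝ} {t : ℝ}

lemma mgf_pi_sum :
    mgf (fun A : ι → X ↦ ∑ i, f (A i)) (Measure.pi fun _ ↦ μ) t = mgf f μ t ^ Fintype.card ι := by
  simp only [mgf, Finset.mul_sum, Real.exp_sum]
  exact integral_fintype_prod_eq_pow (f := fun a ↦ Real.exp (t * f a))

lemma integrable_exp_mul_pi_sum (hf : Integrable (fun a ↦ Real.exp (t * f a)) μ) :
    Integrable (fun A : ι → X ↦ Real.exp (t * ∑ i, f (A i))) (Measure.pi fun _ ↦ μ) := by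
  simp only [Finset.mul_sum, Real.exp_sum]
  exact Integrable.fintype_prod fun _ ↦ hf

lemma measureReal_pi_sum_ge_le (ht : 0 ≤ t) (hf : Integrable (fun a ↦ Real.exp (t * f a)) μ)
    (ε : ℝ) :
    (Measure.pi fun _ : ι ↦ μ).real {A | ε * Fintype.card ι ≤ ∑ i, f (A i)} ≤
      (Real.exp (-t * ε) * mgf f μ t) ^ Fintype.card ι := by
  refine (measure_ge_le_exp_mul_mgf _ ht (integrable_exp_mul_pi_sum hf)).trans_eq ?_
  rw [mgf_pi_sum, mul_pow, ← Real.exp_nat_mul]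
  ring_nf

lemma measureReal_pi_sum_le_le (ht : t ≤ 0) (hf : Integrable (fun a ↦ Real.exp (t * f a)) μ)
    (ε : ℝ) :
    (Measure.pi fun _ : ι ↦ μ).real {A | ∑ i, f (A i) ≤ ε * Fintype.card ι} ≤
      (Real.exp (-t * ε) * mgf f μ t) ^ Fintype.card ι := by
  refine (measure_le_le_exp_mul_mgf _ ht (integrable_exp_mul_pi_sum hf)).trans_eq ?_
  rw [mgf_pi_sum, mul_pow, ← Real.exp_nat_mul]
  ring_nf

end Chernoff

section Measurement

variable {ι F : Type*} [Fintype ι] [NormedAddCommGroup F] [InnerProductSpace ℝ F]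

/-- The linear measurements `w ↦ Aw`, where the rows of the sensing matrix are the vectors `A i`. -/
noncomputable def measurementCLM (A : ι → F) : F →L[ℝ] EuclideanSpace ℝ ι :=
  (PiLp.continuousLinearEquiv 2 ℝ fun _ : ι ↦ ℝ).symm ∘L
    ContinuousLinearMap.pi fun i ↦ innerSL ℝ (A i)

/-- The phaseless measurements `|Aw|` of `w`, with the absolute value taken entrywise. -/
noncomputable def amplitude (A : ι → F) (w : F) : EuclideanSpace ℝ ι :=
  WithLp.toLp 2 fun i ↦ |inner ℝ (A i) w|

lemma norm_sq_measurementCLM (A : ι → F) (u : F) :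
    ‖measurementCLM A u‖ ^ 2 = ∑ i, inner ℝ (A i) u ^ 2 :=
  EuclideanSpace.real_norm_sq_eq _

lemma norm_sq_amplitude_sub (A : ι → F) (u v : F) :
    ‖amplitude A u - amplitude A v‖ ^ 2 = ∑ i, (|inner ℝ (A i) u| - |inner ℝ (A i) v|) ^ 2 :=
  EuclideanSpace.real_norm_sq_eq _

lemma norm_amplitude_sub_le (A : ι → F) (u v : F) :
    ‖amplitude A u - amplitude A v‖ ≤ ‖measurementCLM A (u - v)‖ := by
  rw [← sq_le_sq₀ (norm_nonneg _) (norm_nonneg _), norm_sq_amplitude_sub, norm_sq_measurementCLM]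
  refine Finset.sum_le_sum fun i _ ↦ ?_
  rw [inner_sub_right, sq_le_sq]
  exact abs_abs_sub_abs_le _ _

lemma sq_abs_sub_abs_eq_or (a b : ℝ) :
    (|a| - |b|) ^ 2 = (a - b) ^ 2 ∨ (|a| - |b|) ^ 2 = (a + b) ^ 2 := by
  rcases abs_choice a with ha | ha <;> rcases abs_choice b with hb | hb <;> rw [ha, hb]
  · exact .inl rfl
  · exact .inr (by ring)
  · exact .inr (by ring)
  · exact .inl (by ring)

lemma exp_mul_sq_abs_inner_sub_le (a x w : F) (t : ℝ) :
    Real.exp (t * (|inner ℝ a x| - |inner ℝ a w|) ^ 2) ≤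
      Real.exp (t * inner ℝ a (x - w) ^ 2) + Real.exp (t * inner ℝ a (x + w) ^ 2) := by
  rw [inner_sub_right, inner_add_right]
  rcases sq_abs_sub_abs_eq_or (inner ℝ a x) (inner ℝ a w) with h | h <;> rw [h]
  · exact le_add_of_nonneg_right (Real.exp_nonneg _)
  · exact le_add_of_nonneg_left (Real.exp_nonneg _)

end Measurement

section Tails

variable {ι F : Type*} [Fintype ι] [NormedAddCommGroup F] [InnerProductSpace ℝ F]
  [FiniteDimensional ℝ F] [MeasurableSpace F] [BorelSpace F] {s t : ℝ}

variable (ι F) in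
/-- The law of a random matrix whose rows, indexed by `ι`, are independent standard Gaussian
vectors of `F`. -/
noncomputable abbrev gaussianEnsemble : Measure (ι → F) := Measure.pi fun _ ↦ stdGaussian F

lemma sqrt_two_le_exp_half : √2 ≤ Real.exp (1 / 2) := by
  rw [Real.sqrt_le_left (by positivity), ← Real.exp_nat_mul]
  have := Real.add_one_le_exp 1
  norm_num at this ⊢
  linarith

lemma measureReal_lt_norm_measurementCLM_le (u : F) (hs : 0 ≤ s) :
    (gaussianEnsemble ι F).real {A | s * √(Fintype.card ι) * ‖u‖ < ‖measurementCLM A u‖} ≤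
      Real.exp (-((s ^ 2 / 4 - 1 / 2) * Fintype.card ι)) := by
  rcases eq_or_ne u 0 with rfl | hu
  · simp [Real.exp_nonneg]
  set t := 1 / (4 * ‖u‖ ^ 2) with ht
  have htu : t * ‖u‖ ^ 2 = 1 / 4 := by rw [ht]; field_simp
  have hmgf : mgf (fun a ↦ inner ℝ a u ^ 2) (stdGaussian F) t = √2 := by
    rw [mgf_inner_sq_stdGaussian u (by linarith), mul_assoc, htu, ← Real.sqrt_inv]
    norm_num
  have hexp : Real.exp (-t * (s ^ 2 * ‖u‖ ^ 2)) * √2 ≤ Real.exp (-(s ^ 2 / 4 - 1 / 2)) := by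
    calc Real.exp (-t * (s ^ 2 * ‖u‖ ^ 2)) * √2
        ≤ Real.exp (-t * (s ^ 2 * ‖u‖ ^ 2)) * Real.exp (1 / 2) := by
          gcongr; exact sqrt_two_le_exp_half
      _ = Real.exp (-(s ^ 2 / 4 - 1 / 2)) := by
          rw [← Real.exp_add]; congr 1; linear_combination -s ^ 2 * htu
  calc (gaussianEnsemble ι F).real {A | s * √(Fintype.card ι) * ‖u‖ < ‖measurementCLM A u‖}
      ≤ (gaussianEnsemble ι F).real
          {A | s ^ 2 * ‖u‖ ^ 2 * Fintype.card ι ≤ ∑ i, inner ℝ (A i) u ^ 2} := by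
        refine measureReal_mono fun A hA ↦ ?_
        have := pow_le_pow_left₀ (by positivity) (Set.mem_ofPred.1 hA).le 2
        rw [mul_pow, mul_pow, Real.sq_sqrt (by positivity), norm_sq_measurementCLM] at this
        exact Set.mem_ofPred.2 (by linarith)
    _ ≤ (Real.exp (-t * (s ^ 2 * ‖u‖ ^ 2)) * √2) ^ Fintype.card ι :=
        hmgf ▸ measureReal_pi_sum_ge_le (by positivity)
          (integrable_exp_mul_inner_sq_stdGaussian u (by linarith)) _
    _ ≤ Real.exp (-(s ^ 2 / 4 - 1 / 2)) ^ Fintype.card ι := by gcongr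
    _ = Real.exp (-((s ^ 2 / 4 - 1 / 2) * Fintype.card ι)) := by
        rw [← Real.exp_nat_mul]; ring_nf

lemma mgf_inner_sq_stdGaussian_le (u : F) (hs : 0 < s) (ht : s ^ 2 * (2 * t * ‖u‖ ^ 2) ≤ -1) :
    mgf (fun a ↦ inner ℝ a u ^ 2) (stdGaussian F) t ≤ s := by
  have hneg : 2 * t * ‖u‖ ^ 2 < 0 := by
    by_contra! h
    linarith [mul_nonneg (sq_nonneg s) h]
  rw [mgf_inner_sq_stdGaussian u (by linarith)]
  refine inv_le_of_inv_le₀ hs (Real.le_sqrt_of_sq_le ?_)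
  rw [inv_pow, inv_le_iff_one_le_mul₀' (by positivity)]
  linarith [sq_nonneg s]

lemma integrable_exp_mul_sq_abs_inner_sub (x w : F) (ht : t ≤ 0) :
    Integrable (fun a ↦ Real.exp (t * (|inner ℝ a x| - |inner ℝ a w|) ^ 2)) (stdGaussian F) := by
  refine Integrable.of_bound (by fun_prop) 1 (ae_of_all _ fun a ↦ ?_)
  rw [Real.norm_of_nonneg (Real.exp_nonneg _), Real.exp_le_one_iff]
  exact mul_nonpos_of_nonpos_of_nonneg ht (sq_nonneg _)

lemma mgf_sq_abs_inner_sub_le (x w : F) (hs : 0 < s) (ht : t ≤ 0)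
    (hsub : s ^ 2 * (2 * t * ‖x - w‖ ^ 2) ≤ -1) (hadd : s ^ 2 * (2 * t * ‖x + w‖ ^ 2) ≤ -1) :
    mgf (fun a ↦ (|inner ℝ a x| - |inner ℝ a w|) ^ 2) (stdGaussian F) t ≤ 2 * s := by
  have hint (u : F) : Integrable (fun a ↦ Real.exp (t * inner ℝ a u ^ 2)) (stdGaussian F) :=
    integrable_exp_mul_inner_sq_stdGaussian u (by nlinarith [sq_nonneg ‖u‖])
  calc mgf (fun a ↦ (|inner ℝ a x| - |inner ℝ a w|) ^ 2) (stdGaussian F) t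
      ≤ ∫ a, (Real.exp (t * inner ℝ a (x - w) ^ 2) + Real.exp (t * inner ℝ a (x + w) ^ 2))
          ∂stdGaussian F :=
        integral_mono (integrable_exp_mul_sq_abs_inner_sub x w ht) ((hint _).add (hint _))
          fun a ↦ exp_mul_sq_abs_inner_sub_le a x w t
    _ = mgf (fun a ↦ inner ℝ a (x - w) ^ 2) (stdGaussian F) t +
          mgf (fun a ↦ inner ℝ a (x + w) ^ 2) (stdGaussian F) t :=
        integral_add (hint _) (hint _)
    _ ≤ s + s := add_le_add (mgf_inner_sq_stdGaussian_le _ hs hsub)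
        (mgf_inner_sq_stdGaussian_le _ hs hadd)
    _ = 2 * s := (two_mul s).symm

lemma exp_half_le_two : Real.exp (1 / 2) ≤ 2 := by
  have : Real.exp (1 / 2) ^ 2 < 3 := by
    rw [← Real.exp_nat_mul]
    norm_num [Real.exp_one_lt_three]
  nlinarith

lemma measureReal_norm_amplitude_sub_lt_le (x w : F) (hs : 0 < s) :
    (gaussianEnsemble ι F).real
      {A | ‖amplitude A x - amplitude A w‖ < s * √(Fintype.card ι) * min ‖x - w‖ ‖x + w‖} ≤
      (4 * s) ^ Fintype.card ι := by
  set ρ := min ‖x - w‖ ‖x + w‖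
  have hρ : 0 ≤ ρ := by positivity
  rcases hρ.eq_or_lt with hρ | hρ
  · simp only [← hρ, mul_zero, (norm_nonneg _).not_gt, Set.ofPred_false, measureReal_empty]
    positivity
  set t := -(1 / (2 * (s ^ 2 * ρ ^ 2))) with ht
  have htρ : s ^ 2 * (2 * t * ρ ^ 2) = -1 := by rw [ht]; field_simp
  have ht0 : t ≤ 0 := by rw [ht, neg_nonpos]; positivity
  have hrate (u : F) (hu : ρ ≤ ‖u‖) : s ^ 2 * (2 * t * ‖u‖ ^ 2) ≤ -1 := by
    rw [← htρ]
    refine mul_le_mul_of_nonneg_left (mul_le_mul_of_nonpos_left ?_ (by linarith)) (sq_nonneg s)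
    gcongr
  calc (gaussianEnsemble ι F).real
        {A | ‖amplitude A x - amplitude A w‖ < s * √(Fintype.card ι) * ρ}
      ≤ (gaussianEnsemble ι F).real
          {A | ∑ i, (|inner ℝ (A i) x| - |inner ℝ (A i) w|) ^ 2 ≤
            s ^ 2 * ρ ^ 2 * Fintype.card ι} := by
        refine measureReal_mono fun A hA ↦ ?_
        have := pow_le_pow_left₀ (norm_nonneg _) (Set.mem_ofPred.1 hA).le 2
        rw [mul_pow, mul_pow, Real.sq_sqrt (by positivity), norm_sq_amplitude_sub] at this
        exact Set.mem_ofPred.2 (by linarith)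
    _ ≤ (Real.exp (-t * (s ^ 2 * ρ ^ 2)) *
          mgf (fun a ↦ (|inner ℝ a x| - |inner ℝ a w|) ^ 2) (stdGaussian F) t) ^
            Fintype.card ι :=
        measureReal_pi_sum_le_le ht0 (integrable_exp_mul_sq_abs_inner_sub x w ht0) _
    _ ≤ (2 * (2 * s)) ^ Fintype.card ι := by
        have hexp : Real.exp (-t * (s ^ 2 * ρ ^ 2)) ≤ 2 := by
          rw [show -t * (s ^ 2 * ρ ^ 2) = 1 / 2 by linarith]
          exact exp_half_le_two
        have hmgf := mgf_sq_abs_inner_sub_le x w hs ht0 (hrate _ (min_le_left _ _))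
          (hrate _ (min_le_right _ _))
        exact pow_le_pow_left₀ (mul_nonneg (Real.exp_nonneg _) mgf_nonneg)
          (mul_le_mul hexp hmgf mgf_nonneg zero_le_two) _
    _ = (4 * s) ^ Fintype.card ι := by ring

end Tails

section Nets

open Metric Module

variable {E : Type*} [NormedAddCommGroup E] [NormedSpace ℝ E] [FiniteDimensional ℝ E]
  {x : E} {r ε : ℝ}

lemma card_le_of_pairwise_le_dist {s : Finset E} (hr : 0 ≤ r) (hε : 0 < ε)
    (hs : ↑s ⊆ closedBall x r) (hsep : (s : Set E).Pairwise fun a b ↦ ε ≤ dist a b) :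
    (s.card : ℝ) ≤ (1 + 2 * r / ε) ^ finrank ℝ E := by
  borelize E
  let μ : Measure E := Measure.addHaar
  have hdisj : (s : Set E).PairwiseDisjoint fun a ↦ ball a (ε / 2) := fun a ha b hb hab ↦
    ball_disjoint_ball (by linarith [hsep ha hb hab])
  have hsub : ⋃ a ∈ s, ball a (ε / 2) ⊆ ball x (r + ε / 2) :=
    Set.iUnion₂_subset fun a ha ↦ ball_subset_ball' (by linarith [mem_closedBall.1 (hs ha)])
  have hball (a : E) {ρ : ℝ} (hρ : 0 < ρ) :
      μ.real (ball a ρ) = ρ ^ finrank ℝ E * μ.real (ball 0 1) := by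
    rw [measureReal_def, μ.addHaar_ball_of_pos a hρ, ENNReal.toReal_mul,
      ENNReal.toReal_ofReal (by positivity), measureReal_def]
  have hvol : s.card * ((ε / 2) ^ finrank ℝ E * μ.real (ball 0 1)) ≤
      (r + ε / 2) ^ finrank ℝ E * μ.real (ball 0 1) := by
    calc s.card * ((ε / 2) ^ finrank ℝ E * μ.real (ball 0 1))
        = ∑ a ∈ s, μ.real (ball a (ε / 2)) := by
          simp only [hball _ (half_pos hε), Finset.sum_const, nsmul_eq_mul]
      _ = μ.real (⋃ a ∈ s, ball a (ε / 2)) :=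
          (measureReal_biUnion_finset hdisj fun _ _ ↦ measurableSet_ball).symm
      _ ≤ μ.real (ball x (r + ε / 2)) := measureReal_mono hsub measure_ball_lt_top.ne
      _ = (r + ε / 2) ^ finrank ℝ E * μ.real (ball 0 1) :=
          hball x (by positivity)
  have hpos : 0 < μ.real (ball (0 : E) 1) :=
    ENNReal.toReal_pos (measure_ball_pos _ _ zero_lt_one).ne' measure_ball_lt_top.ne
  rw [← mul_assoc, mul_le_mul_iff_left₀ hpos, ← le_div_iff₀ (by positivity), ← div_pow] at hvol
  refine hvol.trans_eq (congrArg (· ^ finrank ℝ E) ?_)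
  field_simp
  ring

lemma exists_finset_forall_closedBall_dist_le (x : E) (hr : 0 ≤ r) (hε : 0 < ε) :
    ∃ N : Finset E, ↑N ⊆ closedBall x r ∧ (∀ z ∈ closedBall x r, ∃ y ∈ N, dist z y ≤ ε) ∧
      (N.card : ℝ) ≤ (1 + 2 * r / ε) ^ finrank ℝ E := by
  lift ε to NNReal using hε.le
  have hpacking : packingNumber ε (closedBall x r) ≠ ⊤ := by
    obtain ⟨N, -, hfin, hcover⟩ := exists_finite_isCover_of_isCompact (ε := ε / 2)
      (by simpa using hε.ne') (isCompact_closedBall x r)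
    have := (packingNumber_two_mul_le_externalCoveringNumber (ε / 2) _).trans
      hcover.externalCoveringNumber_le_encard
    rw [mul_div_cancel₀ ε two_ne_zero] at this
    exact ne_top_of_le_ne_top hfin.encard_lt_top.ne this
  have hcover := isCover_maximalSeparatedSet hpacking
  have hsep := isSeparated_maximalSeparatedSet (ε := ε) (A := closedBall x r)
  have hsub := maximalSeparatedSet_subset (ε := ε) (A := closedBall x r)
  lift maximalSeparatedSet ε (closedBall x r) to Finset E using
    Set.encard_ne_top_iff.1 (encard_maximalSeparatedSet hpacking ▸ hpacking) with N
  refine ⟨N, hsub, fun z hz ↦ ?_, card_le_of_pairwise_le_dist hr hε hsub ?_⟩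
  · simpa using Set.mem_iUnion₂.1 (isCover_iff_subset_iUnion_closedBall.1 hcover hz)
  · intro a ha b hb hab
    have hε_lt : (ε : ENNReal) < edist a b := hsep ha hb hab
    rw [edist_nndist] at hε_lt
    exact_mod_cast hε_lt.le

lemma exists_finset_forall_image_closedBall_dist_le {Y : Type*} [PseudoMetricSpace Y] {G : E → Y}
    {L : NNReal} (hG : LipschitzOnWith L G (closedBall x r)) (hL : 0 < L) (hr : 0 ≤ r)
    (hε : 0 < ε) :
    ∃ W : Finset Y, (∀ q ∈ G '' closedBall x r, ∃ w ∈ W, dist q w ≤ ε) ∧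
      (W.card : ℝ) ≤ (1 + 2 * (L * r / ε)) ^ finrank ℝ E := by
  classical
  obtain ⟨N, hNr, hN, hcard⟩ := exists_finset_forall_closedBall_dist_le x hr (div_pos hε hL)
  refine ⟨N.image G, ?_, ?_⟩
  · rintro _ ⟨z, hz, rfl⟩
    obtain ⟨y, hy, hzy⟩ := hN z hz
    refine ⟨G y, Finset.mem_image_of_mem G hy, ?_⟩
    calc dist (G z) (G y) ≤ L * dist z y := hG.dist_le_mul z hz y (hNr hy)
      _ ≤ L * (ε / L) := mul_le_mul_of_nonneg_left hzy L.2
      _ = ε := mul_div_cancel₀ ε (by positivity)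
  · calc ((N.image G).card : ℝ) ≤ N.card := mod_cast Finset.card_image_le
      _ ≤ (1 + 2 * r / (ε / L)) ^ finrank ℝ E := hcard
      _ = (1 + 2 * (L * r / ε)) ^ finrank ℝ E := by
          congr 2
          field_simp

end Nets

section Chaining

lemma hasSum_succ_mul_half_pow : HasSum (fun i : ℕ ↦ ((i : ℝ) + 1) * (1 / 2) ^ i) 4 := by
  have hlinear := hasSum_coe_mul_geometric_of_norm_lt_one (r := (1 / 2 : ℝ)) (by norm_num)
  have hsum := hlinear.add hasSum_geometric_two
  rw [show (1 / 2 / (1 - 1 / 2) ^ 2 + 2 : ℝ) = 4 by norm_num] at hsum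
  simpa only [add_mul, one_mul] using hsum

lemma tendsto_of_norm_sub_le_div_two_pow {F : Type*} [SeminormedAddCommGroup F]
    {w : ℕ → F} {q : F} {δ : ℝ}
    (hw : ∀ i, ‖q - w i‖ ≤ δ / 2 ^ i) : Filter.Tendsto w Filter.atTop (nhds q) := by
  refine tendsto_iff_norm_sub_tendsto_zero.2 (squeeze_zero (fun _ ↦ norm_nonneg _)
    (fun i ↦ norm_sub_rev q (w i) ▸ hw i) ?_)
  simpa only [div_eq_mul_inv, inv_pow, mul_zero] using
    (tendsto_pow_atTop_nhds_zero_of_lt_one (r := (2 : ℝ)⁻¹) (by norm_num)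
      (by norm_num)).const_mul δ

variable {F H : Type*} [NormedAddCommGroup F] [NormedSpace ℝ F] [NormedAddCommGroup H]
  [NormedSpace ℝ H]

lemma norm_map_sub_le_of_chain (T : F →L[ℝ] H) {w : ℕ → F} {q : F} {δ K : ℝ} (hK : 0 ≤ K)
    (hw : ∀ i, ‖q - w i‖ ≤ δ / 2 ^ i)
    (hT : ∀ i : ℕ, ‖T (w i - w (i + 1))‖ ≤ K * (i + 1) * ‖w i - w (i + 1)‖) :
    ‖T (w 0 - q)‖ ≤ 6 * K * δ := by
  have hincr (i : ℕ) : ‖w i - w (i + 1)‖ ≤ 3 / 2 * δ * (1 / 2) ^ i := by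
    calc ‖w i - w (i + 1)‖ ≤ ‖q - w i‖ + ‖q - w (i + 1)‖ := by
          simpa only [dist_eq_norm] using dist_triangle_left (w i) (w (i + 1)) q
      _ ≤ δ / 2 ^ i + δ / 2 ^ (i + 1) := add_le_add (hw i) (hw (i + 1))
      _ = 3 / 2 * δ * (1 / 2) ^ i := by
          rw [div_pow, one_pow]
          field_simp
          ring
  have hstep (i : ℕ) :
      dist (T (w i)) (T (w (i + 1))) ≤ 3 / 2 * K * δ * ((i + 1) * (1 / 2) ^ i) := by
    rw [dist_eq_norm, ← map_sub]
    calc ‖T (w i - w (i + 1))‖ ≤ K * (i + 1) * ‖w i - w (i + 1)‖ := hT i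
      _ ≤ K * (i + 1) * (3 / 2 * δ * (1 / 2) ^ i) := by gcongr; exact hincr i
      _ = 3 / 2 * K * δ * ((i + 1) * (1 / 2) ^ i) := by ring
  have hsum := hasSum_succ_mul_half_pow.mul_left (3 / 2 * K * δ)
  calc ‖T (w 0 - q)‖ = dist (T (w 0)) (T q) := by rw [map_sub, dist_eq_norm]
    _ ≤ ∑' i : ℕ, 3 / 2 * K * δ * ((i + 1) * (1 / 2) ^ i) :=
        dist_le_tsum_of_dist_le_of_tendsto₀ _ hstep hsum.summable
          ((T.continuous.tendsto q).comp (tendsto_of_norm_sub_le_div_two_pow hw))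
    _ = 6 * K * δ := by
        rw [hsum.tsum_eq]
        ring

end Chaining

section Recovery

lemma min_norm_sub_norm_add_le {F : Type*} [SeminormedAddCommGroup F] (x w q : F) :
    min ‖q - x‖ ‖q + x‖ ≤ min ‖x - w‖ ‖x + w‖ + ‖q - w‖ := by
  have hsub : ‖q - x‖ ≤ ‖x - w‖ + ‖q - w‖ := by
    simpa only [dist_eq_norm, norm_sub_rev w x, add_comm] using dist_triangle q w x
  have hadd : ‖q + x‖ ≤ ‖x + w‖ + ‖q - w‖ := by
    simpa only [add_add_sub_cancel, add_comm] using norm_add_le (x + w) (q - w)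
  rw [min_add]
  exact min_le_min hsub hadd

lemma norm_sub_le_of_norm_add_sub_sq_le {H : Type*} [SeminormedAddCommGroup H] {a b c η : H} {τ : ℝ}
    (hτ : 0 ≤ τ) (h : ‖a + η - c‖ ^ 2 ≤ ‖a + η - b‖ ^ 2 + τ) :
    ‖a - c‖ ≤ ‖a - b‖ + 2 * ‖η‖ + √τ := by
  have hloss : ‖a + η - c‖ ≤ ‖a + η - b‖ + √τ := by
    refine abs_le_of_sq_le_sq' (h.trans ?_) (by positivity) |>.2
    rw [add_sq, Real.sq_sqrt hτ]
    linarith [show 0 ≤ 2 * ‖a + η - b‖ * √τ by positivity]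
  rw [add_sub_right_comm a η c, add_sub_right_comm a η b] at hloss
  linarith [norm_le_add_norm_add (a - c) η, norm_add_le (a - b) η]

variable {ι F : Type*} [Fintype ι] [NormedAddCommGroup F] [InnerProductSpace ℝ F]

/-- The sensing matrix `A` behaves well on the signal `x`, the point `p` and the nets `W i`:
it does not stretch `x - p` much, its amplitudes separate `x` from the points of the coarsest net
`W 0` up to a sign, and it stretches the differences of points of consecutive nets by a factor that
grows at most linearly in the level. -/
structure IsNetRegular (A : ι → F) (x p : F) (W : ℕ → Finset F) : Prop where
  norm_map_sub_le : ‖measurementCLM A (x - p)‖ ≤ 8 * √(Fintype.card ι) * ‖x - p‖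
  min_le_norm_amplitude_sub : ∀ w ∈ W 0,
    1 / 2000 * √(Fintype.card ι) * min ‖x - w‖ ‖x + w‖ ≤ ‖amplitude A x - amplitude A w‖
  norm_map_sub_succ_le : ∀ i, ∀ u ∈ W i, ∀ v ∈ W (i + 1),
    ‖measurementCLM A (u - v)‖ ≤ 8 * (i + 1) * √(Fintype.card ι) * ‖u - v‖

variable {A : ι → F} {x p q : F} {W : ℕ → Finset F} {δ τ : ℝ}

lemma not_isNetRegular_iff : ¬ IsNetRegular A x p W ↔
    8 * √(Fintype.card ι) * ‖x - p‖ < ‖measurementCLM A (x - p)‖ ∨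
    (∃ w ∈ W 0, ‖amplitude A x - amplitude A w‖ <
      1 / 2000 * √(Fintype.card ι) * min ‖x - w‖ ‖x + w‖) ∨
    ∃ i : ℕ, ∃ u ∈ W i, ∃ v ∈ W (i + 1),
      8 * (i + 1) * √(Fintype.card ι) * ‖u - v‖ < ‖measurementCLM A (u - v)‖ := by
  rw [not_iff_comm]
  push Not
  exact ⟨fun ⟨hp, hbase, hstep⟩ ↦ ⟨hp, hbase, hstep⟩, fun ⟨hp, hbase, hstep⟩ ↦ ⟨hp, hbase, hstep⟩⟩

lemma IsNetRegular.sqrt_card_mul_min_le (hA : IsNetRegular A x p W)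
    (hq : ∀ i, ∃ w ∈ W i, ‖q - w‖ ≤ δ / 2 ^ i) :
    √(Fintype.card ι) * min ‖q - x‖ ‖q + x‖ ≤
      2000 * ‖amplitude A x - amplitude A q‖ + 96001 * √(Fintype.card ι) * δ := by
  choose w hwW hwq using hq
  set b := √(Fintype.card ι : ℝ)
  have hchain : ‖measurementCLM A (w 0 - q)‖ ≤ 6 * (8 * b) * δ :=
    norm_map_sub_le_of_chain _ (by positivity) hwq fun i ↦
      (hA.norm_map_sub_succ_le i _ (hwW i) _ (hwW (i + 1))).trans_eq (by ring)
  have hamp : ‖amplitude A x - amplitude A (w 0)‖ ≤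
      ‖amplitude A x - amplitude A q‖ + ‖measurementCLM A (w 0 - q)‖ := by
    refine (norm_sub_le_norm_sub_add_norm_sub _ (amplitude A q) _).trans ?_
    rw [norm_sub_rev (amplitude A q)]
    gcongr
    exact norm_amplitude_sub_le A _ _
  have hmin : b * min ‖q - x‖ ‖q + x‖ ≤ b * min ‖x - w 0‖ ‖x + w 0‖ + b * δ := by
    rw [← mul_add]
    gcongr
    exact (min_norm_sub_norm_add_le x (w 0) q).trans (by simpa using hwq 0)
  linarith [hA.min_le_norm_amplitude_sub _ (hwW 0)]

lemma IsNetRegular.min_le (hA : IsNetRegular A x p W) [Nonempty ι] (hδ : 0 ≤ δ) (hτ : 0 ≤ τ)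
    (hq : ∀ i, ∃ w ∈ W i, ‖q - w‖ ≤ δ / 2 ^ i) {η : EuclideanSpace ℝ ι}
    (hloss : ‖amplitude A x + η - amplitude A q‖ ^ 2 ≤
      ‖amplitude A x + η - amplitude A p‖ ^ 2 + τ) :
    min ‖q - x‖ ‖q + x‖ ≤
      10 ^ 5 * (‖p - x‖ + (‖η‖ + √τ) / √(Fintype.card ι) + δ) := by
  have hb : 0 < √(Fintype.card ι : ℝ) := by positivity
  have hp : ‖amplitude A x - amplitude A p‖ ≤ 8 * √(Fintype.card ι) * ‖p - x‖ :=
    norm_sub_rev p x ▸ (norm_amplitude_sub_le A x p).trans hA.norm_map_sub_le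
  have hamp := norm_sub_le_of_norm_add_sub_sq_le hτ hloss
  rw [← mul_le_mul_iff_right₀ hb]
  calc √(Fintype.card ι) * min ‖q - x‖ ‖q + x‖
      ≤ 2000 * (8 * √(Fintype.card ι) * ‖p - x‖ + 2 * ‖η‖ + √τ) +
          96001 * √(Fintype.card ι) * δ := by
        linarith [hA.sqrt_card_mul_min_le hq]
    _ ≤ 10 ^ 5 * (√(Fintype.card ι) * ‖p - x‖ + (‖η‖ + √τ) + √(Fintype.card ι) * δ) := by
        have : 0 ≤ √(Fintype.card ι) * ‖p - x‖ := by positivity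
        have : 0 ≤ √(Fintype.card ι) * δ := by positivity
        linarith [norm_nonneg η, Real.sqrt_nonneg τ]
    _ = √(Fintype.card ι) *
          (10 ^ 5 * (‖p - x‖ + (‖η‖ + √τ) / √(Fintype.card ι) + δ)) := by
        field_simp

end Recovery

section UnionBound

variable {ι F : Type*} [Fintype ι] [NormedAddCommGroup F] [InnerProductSpace ℝ F]
  [FiniteDimensional ℝ F] [MeasurableSpace F] [BorelSpace F] {x p : F} {W : ℕ → Finset F}

lemma one_add_two_mul_pow_le_exp {ρ M : ℝ} {d : ℕ} (hρ : 0 < ρ) (hlog : 1 ≤ Real.log ρ)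
    (hM : d * Real.log ρ ≤ M) (i : ℕ) :
    (1 + 2 * (2 ^ i * ρ)) ^ d ≤ Real.exp ((i + 3) * M) := by
  have hρ1 : 1 ≤ ρ := ((Real.le_log_iff_exp_le hρ).1 hlog).trans' (Real.one_le_exp zero_le_one)
  have hscale : 1 ≤ 2 ^ i * ρ := one_le_mul_of_one_le_of_one_le (one_le_pow₀ one_le_two) hρ1
  have hbase : 1 + 2 * (2 ^ i * ρ) ≤ Real.exp ((i + 3) * Real.log ρ) := by
    calc 1 + 2 * (2 ^ i * ρ) ≤ (2 + 1) * ((1 + 1) ^ i * ρ) := by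
          norm_num
          linarith
      _ ≤ Real.exp 2 * (Real.exp 1 ^ i * Real.exp (Real.log ρ)) := by
          rw [Real.exp_log hρ]
          gcongr <;> exact Real.add_one_le_exp _
      _ = Real.exp (i + 2 + Real.log ρ) := by
          rw [← Real.exp_nat_mul, ← Real.exp_add, ← Real.exp_add]
          ring_nf
      _ ≤ Real.exp ((i + 3) * Real.log ρ) := by
          gcongr
          nlinarith [Nat.cast_nonneg (α := ℝ) i]
  calc (1 + 2 * (2 ^ i * ρ)) ^ d ≤ Real.exp ((i + 3) * Real.log ρ) ^ d := by gcongr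
    _ = Real.exp ((i + 3) * (d * Real.log ρ)) := by
        rw [← Real.exp_nat_mul]
        ring_nf
    _ ≤ Real.exp ((i + 3) * M) := by gcongr

lemma exp_neg_mul_le_mul_half_pow {M : ℝ} (hM : 1 ≤ M) (i : ℕ) :
    Real.exp (-((i + 3) * M)) ≤ Real.exp (-M) / 4 * (1 / 2) ^ i := by
  have hhalf : Real.exp (-1) ≤ 1 / 2 := by
    rw [Real.exp_neg, ← one_div]
    gcongr
    linarith [Real.add_one_le_exp 1]
  calc Real.exp (-((i + 3) * M)) ≤ Real.exp (-M + (i + 2 : ℕ) * -1) := by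
        gcongr
        push_cast
        nlinarith [Nat.cast_nonneg (α := ℝ) i]
    _ = Real.exp (-M) * Real.exp (-1) ^ (i + 2) := by rw [Real.exp_add, Real.exp_nat_mul]
    _ ≤ Real.exp (-M) * (1 / 2) ^ (i + 2) := by gcongr
    _ = Real.exp (-M) / 4 * (1 / 2) ^ i := by ring

lemma one_div_le_exp_neg_six : (1 / 500 : ℝ) ≤ Real.exp (-6) := by
  have : Real.exp 6 ≤ 500 := by
    calc Real.exp 6 = Real.exp 1 ^ 6 := by rw [← Real.exp_nat_mul]; norm_num
      _ ≤ 2.719 ^ 6 := by gcongr; linarith [Real.exp_one_lt_d9]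
      _ ≤ 500 := by norm_num
  rw [Real.exp_neg, ← one_div]
  gcongr

lemma measureReal_exists_norm_amplitude_sub_lt_le (x : F) {N : Finset F}
    (hN : N.card ≤ Real.exp (3 * Fintype.card ι)) :
    (gaussianEnsemble ι F).real {A | ∃ w ∈ N, ‖amplitude A x - amplitude A w‖ <
      1 / 2000 * √(Fintype.card ι) * min ‖x - w‖ ‖x + w‖} ≤
      Real.exp (-(3 * Fintype.card ι)) := by
  simp only [← exists_prop, Set.ofPred_exists]
  calc _ ≤ ∑ w ∈ N, (gaussianEnsemble ι F).real {A | ‖amplitude A x - amplitude A w‖ <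
          1 / 2000 * √(Fintype.card ι) * min ‖x - w‖ ‖x + w‖} :=
        measureReal_biUnion_finset_le _ _
    _ ≤ ∑ _w ∈ N, Real.exp (-6) ^ Fintype.card ι := by
        gcongr with w
        exact (measureReal_norm_amplitude_sub_lt_le x w (by norm_num)).trans
          (pow_le_pow_left₀ (by norm_num) (by linarith [one_div_le_exp_neg_six]) _)
    _ ≤ Real.exp (3 * Fintype.card ι) * Real.exp (-6) ^ Fintype.card ι := by
        rw [Finset.sum_const, nsmul_eq_mul]
        gcongr
    _ = Real.exp (-(3 * Fintype.card ι)) := by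
        rw [← Real.exp_nat_mul, ← Real.exp_add]
        ring_nf

lemma measureReal_exists_lt_norm_measurementCLM_sub_le {N N' : Finset F} {i : ℕ}
    (hN : N.card ≤ Real.exp ((i + 3) * Fintype.card ι))
    (hN' : N'.card ≤ Real.exp ((i + 1 + 3) * Fintype.card ι)) :
    (gaussianEnsemble ι F).real {A | ∃ u ∈ N, ∃ v ∈ N',
      8 * (i + 1) * √(Fintype.card ι) * ‖u - v‖ < ‖measurementCLM A (u - v)‖} ≤
      Real.exp (-((i + 3) * Fintype.card ι)) := by
  set M := (Fintype.card ι : ℝ)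
  simp only [← exists_prop, Set.ofPred_exists]
  calc _ ≤ ∑ u ∈ N, ∑ v ∈ N', (gaussianEnsemble ι F).real
          {A | 8 * (i + 1) * √M * ‖u - v‖ < ‖measurementCLM A (u - v)‖} :=
        (measureReal_biUnion_finset_le _ _).trans
          (Finset.sum_le_sum fun u _ ↦ measureReal_biUnion_finset_le _ _)
    _ ≤ ∑ _u ∈ N, ∑ _v ∈ N', Real.exp (-(((8 * (i + 1)) ^ 2 / 4 - 1 / 2) * M)) := by
        gcongr with u _ v
        exact measureReal_lt_norm_measurementCLM_le (u - v) (by positivity)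
    _ ≤ Real.exp ((i + 3) * M) * (Real.exp ((i + 1 + 3) * M) *
          Real.exp (-(((8 * (i + 1)) ^ 2 / 4 - 1 / 2) * M))) := by
        simp only [Finset.sum_const, nsmul_eq_mul]
        gcongr
    _ ≤ Real.exp (-((i + 3) * M)) := by
        rw [← Real.exp_add, ← Real.exp_add]
        gcongr
        have hlevel : 0 ≤ (16 * (i : ℝ) ^ 2 + 29 * i + 5.5) * M := by positivity
        linarith

lemma measure_iUnion_le_of_le_mul_half_pow {X : Type*} [MeasurableSpace X] {μ : Measure X}
    [IsFiniteMeasure μ] {s : ℕ → Set X} {a : ℝ} (hs : ∀ i, μ.real (s i) ≤ a * (1 / 2) ^ i) :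
    μ (⋃ i, s i) ≤ ENNReal.ofReal (2 * a) := by
  have hsum : HasSum (fun i : ℕ ↦ a * (1 / 2) ^ i) (2 * a) :=
    mul_comm a 2 ▸ hasSum_geometric_two.mul_left a
  calc μ (⋃ i, s i) ≤ ∑' i, μ (s i) := measure_iUnion_le s
    _ ≤ ∑' i : ℕ, ENNReal.ofReal (a * (1 / 2) ^ i) := ENNReal.tsum_le_tsum fun i ↦ by
        rw [← ofReal_measureReal]
        exact ENNReal.ofReal_le_ofReal (hs i)
    _ = ENNReal.ofReal (2 * a) := by
        rw [← ENNReal.ofReal_tsum_of_nonneg (fun i ↦ measureReal_nonneg.trans (hs i)) hsum.summable,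
          hsum.tsum_eq]

lemma gaussianEnsemble_not_isNetRegular_le [Nonempty ι] (x p : F)
    (hW : ∀ i : ℕ, (W i).card ≤ Real.exp ((i + 3) * Fintype.card ι)) :
    gaussianEnsemble ι F {A | ¬ IsNetRegular A x p W} ≤
      ENNReal.ofReal (Real.exp (-Fintype.card ι)) := by
  have hM : (1 : ℝ) ≤ Fintype.card ι := mod_cast Fintype.card_pos (α := ι)
  set P := gaussianEnsemble ι F
  set M := (Fintype.card ι : ℝ)
  set a := Real.exp (-M) / 4
  have htarget : P.real {A | 8 * √M * ‖x - p‖ < ‖measurementCLM A (x - p)‖} ≤ a := by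
    refine (measureReal_lt_norm_measurementCLM_le (x - p) (by norm_num)).trans
      (le_trans ?_ ((exp_neg_mul_le_mul_half_pow hM 0).trans_eq (by simp [a])))
    gcongr
    norm_num
  have hbase : P.real {A | ∃ w ∈ W 0, ‖amplitude A x - amplitude A w‖ <
      1 / 2000 * √M * min ‖x - w‖ ‖x + w‖} ≤ a :=
    (measureReal_exists_norm_amplitude_sub_lt_le x (by simpa using hW 0)).trans
      (by simpa using exp_neg_mul_le_mul_half_pow hM 0)
  have hstep (i : ℕ) : P.real {A | ∃ u ∈ W i, ∃ v ∈ W (i + 1),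
      8 * (i + 1) * √M * ‖u - v‖ < ‖measurementCLM A (u - v)‖} ≤ a * (1 / 2) ^ i :=
    (measureReal_exists_lt_norm_measurementCLM_sub_le (hW i) (by simpa using hW (i + 1))).trans
      (exp_neg_mul_le_mul_half_pow hM i)
  have ha : 0 ≤ a := by positivity
  calc P {A | ¬ IsNetRegular A x p W}
      ≤ ENNReal.ofReal a + (ENNReal.ofReal a + ENNReal.ofReal (2 * a)) := by
        simp only [not_isNetRegular_iff, Set.ofPred_or, Set.ofPred_exists (p := fun _ : ℕ ↦ _)]
        refine (measure_union_le _ _).trans (add_le_add ?_ ((measure_union_le _ _).trans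
          (add_le_add ?_ (measure_iUnion_le_of_le_mul_half_pow hstep))))
        · exact (ENNReal.le_ofReal_iff_toReal_le (measure_ne_top _ _) ha).2 htarget
        · exact (ENNReal.le_ofReal_iff_toReal_le (measure_ne_top _ _) ha).2 hbase
    _ = ENNReal.ofReal (Real.exp (-M)) := by
        rw [← ENNReal.ofReal_add (by positivity) (by positivity),
          ← ENNReal.ofReal_add (by positivity) (by positivity)]
        congr 1
        ring

lemma le_measure_isNetRegular [Nonempty ι] {Ω : Type*} [MeasurableSpace Ω] {P : Measure Ω}
    {A : Ω → ι → F} (hA : HasLaw A (gaussianEnsemble ι F) P) (x p : F)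
    (hW : ∀ i : ℕ, (W i).card ≤ Real.exp ((i + 3) * Fintype.card ι)) :
    ENNReal.ofReal (1 - Real.exp (-Fintype.card ι)) ≤ P {ω | IsNetRegular (A ω) x p W} := by
  have := hA.isProbabilityMeasure
  have hbad : P {ω | IsNetRegular (A ω) x p W}ᶜ ≤ ENNReal.ofReal (Real.exp (-Fintype.card ι)) := by
    calc P {ω | IsNetRegular (A ω) x p W}ᶜ
        ≤ P.map A {A | ¬ IsNetRegular A x p W} := Measure.le_map_apply hA.aemeasurable _
      _ ≤ _ := hA.map_eq ▸ gaussianEnsemble_not_isNetRegular_le x p hW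
  rw [ENNReal.ofReal_sub _ (Real.exp_nonneg _), ENNReal.ofReal_one, tsub_le_iff_right]
  calc 1 = P ({ω | IsNetRegular (A ω) x p W} ∪ {ω | IsNetRegular (A ω) x p W}ᶜ) := by simp
    _ ≤ P {ω | IsNetRegular (A ω) x p W} + P {ω | IsNetRegular (A ω) x p W}ᶜ :=
        measure_union_le _ _
    _ ≤ _ := add_le_add_right hbad _

end UnionBound

section Main

open Metric Module

variable {E F : Type*} [NormedAddCommGroup E] [NormedAddCommGroup F] {G : E → F} {L : NNReal}
  {c : E} {r δ : ℝ}

lemma norm_sub_le_of_log_lt_one (hG : LipschitzOnWith L G (closedBall c r)) (hδ : 0 < δ)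
    (hlog : Real.log (L * r / δ) < 1) {p q : F} (hp : p ∈ G '' closedBall c r)
    (hq : q ∈ G '' closedBall c r) : ‖q - p‖ ≤ 6 * δ := by
  have hratio : L * r / δ ≤ 3 := by
    by_contra! h
    refine hlog.not_ge ((Real.le_log_iff_exp_le (by positivity)).2 ?_)
    linarith [Real.exp_one_lt_three]
  rw [div_le_iff₀ hδ] at hratio
  obtain ⟨z, hz, rfl⟩ := hp
  obtain ⟨y, hy, rfl⟩ := hq
  calc ‖G y - G z‖ = dist (G y) (G z) := (dist_eq_norm _ _).symm
    _ ≤ L * dist y z := hG.dist_le_mul y hy z hz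
    _ ≤ L * (r + r) := by
        gcongr
        exact (dist_triangle_right y z c).trans (add_le_add hy hz)
    _ ≤ 6 * δ := by linarith

variable [NormedSpace ℝ E] [FiniteDimensional ℝ E]

lemma exists_nets_image_closedBall (hG : LipschitzOnWith L G (closedBall c r)) (hr : 0 ≤ r)
    (hδ : 0 < δ) (hlog : 1 ≤ Real.log (L * r / δ)) {M : ℝ}
    (hM : finrank ℝ E * Real.log (L * r / δ) ≤ M) :
    ∃ W : ℕ → Finset F, (∀ i, ∀ q ∈ G '' closedBall c r, ∃ w ∈ W i, ‖q - w‖ ≤ δ / 2 ^ i) ∧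
      ∀ i : ℕ, (W i).card ≤ Real.exp ((i + 3) * M) := by
  have hratio : L * r / δ ≠ 0 := by
    intro h
    norm_num [h] at hlog
  have hL : 0 < L := pos_iff_ne_zero.2 (by rintro rfl; simp at hratio)
  have hnet (i : ℕ) := exists_finset_forall_image_closedBall_dist_le hG hL hr
    (show 0 < δ / 2 ^ i by positivity)
  choose W hW hcard using hnet
  refine ⟨W, fun i q hq ↦ by simpa only [dist_eq_norm] using hW i q hq, fun i ↦ ?_⟩
  calc ((W i).card : ℝ) ≤ (1 + 2 * (L * r / (δ / 2 ^ i))) ^ finrank ℝ E := hcard i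
    _ = (1 + 2 * (2 ^ i * (L * r / δ))) ^ finrank ℝ E := by
        congr 3
        field_simp
    _ ≤ Real.exp ((i + 3) * M) :=
        one_add_two_mul_pow_le_exp (hratio.symm.lt_of_le (by positivity)) hlog hM i

theorem stmt_0_general {Ω ι : Type*} [MeasurableSpace Ω] [Fintype ι] [InnerProductSpace ℝ F]
    [FiniteDimensional ℝ F] [MeasurableSpace F] [BorelSpace F]
    {P : Measure Ω} {A : Ω → ι → F} (hA : HasLaw A (gaussianEnsemble ι F) P)
    (hG : LipschitzOnWith L G (closedBall c r)) (hδ : 0 < δ)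
    (hm : finrank ℝ E * Real.log (L * r / δ) ≤ Fintype.card ι) (x : F) {p : F}
    (hp : p ∈ G '' closedBall c r) :
    ENNReal.ofReal (1 - Real.exp (-Fintype.card ι)) ≤
      P {ω | ∀ (η : EuclideanSpace ℝ ι) (τ : ℝ), 0 ≤ τ → ∀ q ∈ G '' closedBall c r,
        ‖amplitude (A ω) x + η - amplitude (A ω) q‖ ^ 2 ≤
          ‖amplitude (A ω) x + η - amplitude (A ω) p‖ ^ 2 + τ →
        min ‖q - x‖ ‖q + x‖ ≤ 10 ^ 5 * (‖p - x‖ + (‖η‖ + √τ) / √(Fintype.card ι) + δ)} := by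
  have := hA.isProbabilityMeasure
  rcases isEmpty_or_nonempty ι with _ | _
  · simp
  rcases lt_or_ge (Real.log (L * r / δ)) 1 with hlog | hlog
  · refine (ENNReal.ofReal_le_one.2 (by linarith [Real.exp_nonneg (-Fintype.card ι)])).trans_eq ?_
    rw [← measure_univ (μ := P)]
    refine congrArg P (Set.eq_univ_of_forall fun ω η τ _ q hq _ ↦ ?_).symm
    calc min ‖q - x‖ ‖q + x‖ ≤ ‖q - x‖ := min_le_left _ _
      _ ≤ ‖q - p‖ + ‖p - x‖ := norm_sub_le_norm_sub_add_norm_sub _ _ _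
      _ ≤ 10 ^ 5 * (‖p - x‖ + (‖η‖ + √τ) / √(Fintype.card ι) + δ) := by
          have : 0 ≤ (‖η‖ + √τ) / √(Fintype.card ι) := by positivity
          linarith [norm_sub_le_of_log_lt_one hG hδ hlog hp hq, norm_nonneg (p - x)]
  · obtain ⟨z, hz, -⟩ := hp
    obtain ⟨W, hW, hcard⟩ :=
      exists_nets_image_closedBall hG (dist_nonneg.trans hz) hδ hlog hm
    exact (le_measure_isNetRegular hA x p hcard).trans (measure_mono
      fun ω (hω : IsNetRegular (A ω) x p W) _ _ hτ q hq hloss ↦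
        hω.min_le hδ.le hτ (fun i ↦ hW i q hq) hloss)

end Main

section Coordinates

variable {k m n : ℕ}

lemma l2norm_eq_norm_toLp (v : Fin n → ℝ) : l2norm v = ‖WithLp.toLp 2 v‖ := by
  simp [l2norm, EuclideanSpace.norm_eq]

/-- A map between coordinate spaces, viewed as a map between Euclidean spaces: the norm of
`Fin n → ℝ` is the sup norm, that of `EuclideanSpace ℝ (Fin n)` is `l2norm`. -/
def euclideanMap (G : (Fin k → ℝ) → Fin n → ℝ) (z : EuclideanSpace ℝ (Fin k)) :
    EuclideanSpace ℝ (Fin n) :=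
  WithLp.toLp 2 (G z.ofLp)

lemma inRange_iff {G : (Fin k → ℝ) → Fin n → ℝ} {r : ℝ} {w : Fin n → ℝ} :
    InRange G r w ↔ WithLp.toLp 2 w ∈ euclideanMap G '' Metric.closedBall 0 r := by
  constructor
  · rintro ⟨z, hz, rfl⟩
    exact ⟨WithLp.toLp 2 z, by simpa [l2norm_eq_norm_toLp] using hz, rfl⟩
  · rintro ⟨z, hz, hzw⟩
    exact ⟨z.ofLp, by simpa [l2norm_eq_norm_toLp] using hz, WithLp.toLp_injective 2 hzw⟩

lemma lipschitzOnWith_euclideanMap {G : (Fin k → ℝ) → Fin n → ℝ} {L : NNReal} {r : ℝ}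
    (hG : ∀ z₁ z₂ : Fin k → ℝ, l2norm z₁ ≤ r → l2norm z₂ ≤ r →
      l2norm (G z₁ - G z₂) ≤ L * l2norm (z₁ - z₂)) :
    LipschitzOnWith L (euclideanMap G) (Metric.closedBall 0 r) := by
  simp only [l2norm_eq_norm_toLp] at hG
  refine LipschitzOnWith.of_dist_le_mul fun y hy z hz ↦ ?_
  simpa [dist_eq_norm, euclideanMap] using
    hG y.ofLp z.ofLp (by simpa using hy) (by simpa using hz)

lemma toLp_abs_dotProduct (A : Fin m → Fin n → ℝ) (w : Fin n → ℝ) :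
    WithLp.toLp 2 (fun i ↦ |A i ⬝ᵥ w|) =
      amplitude (fun i ↦ WithLp.toLp 2 (A i)) (WithLp.toLp 2 w) := by
  ext i
  simp [amplitude, EuclideanSpace.inner_eq_star_dotProduct, dotProduct_comm]

lemma IIDStdGaussian.hasLaw {Ω : Type} [MeasurableSpace Ω] {P : Measure Ω}
    {A : Ω → Fin m → Fin n → ℝ} (h : IIDStdGaussian P m n A) (hA : Measurable A) :
    HasLaw (fun ω i ↦ WithLp.toLp 2 (A ω i))
      (gaussianEnsemble (Fin m) (EuclideanSpace ℝ (Fin n))) P := by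
  have hrows : MeasurePreserving (fun (B : Fin m → Fin n → ℝ) i ↦ WithLp.toLp 2 (B i))
      (Measure.pi fun _ ↦ Measure.pi fun _ ↦ gaussianReal 0 1)
      (gaussianEnsemble (Fin m) (EuclideanSpace ℝ (Fin n))) :=
    measurePreserving_pi _ _ fun _ ↦ ⟨by fun_prop, map_pi_eq_stdGaussian⟩
  exact hrows.hasLaw.comp ⟨hA.aemeasurable, h⟩

end Coordinates

/-- Theorem 1 (recovery guarantee for amplitude-based loss minimization): there exist
universal constants `C, c, C' > 0` such that for any `L`-Lipschitz
`G : B₂ᵏ(r) → ℝⁿ`, any `x ∈ ℝⁿ`, any `δ > 0`, `τ > 0`, a random matrix `A ∈ ℝ^{m×n}`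
with i.i.d. `N(0,1)` entries, measurements `y = |Ax| + η`, `p` a closest point of
`Range(G)` to `x`, and `q ∈ Range(G)` minimizing the amplitude loss
`‖y − |A·|‖₂²` over `Range(G)` to within additive `τ`: if `m ≥ C k log(Lr/δ)`, then
with probability at least `1 − e^{−c m}`,
`min{‖q − x‖₂, ‖q + x‖₂} ≤ C'(‖p − x‖₂ + (‖η‖₂ + √τ)/√m + δ)`. -/
theorem stmt_0 :
    ∃ C c C' : ℝ, 0 < C ∧ 0 < c ∧ 0 < C' ∧
      ∀ (k n m : ℕ) (L r δ τ : ℝ), 0 < L → 0 < r → 0 < δ → 0 < τ →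
      ∀ G : (Fin k → ℝ) → Fin n → ℝ,
        (∀ z₁ z₂ : Fin k → ℝ, l2norm z₁ ≤ r → l2norm z₂ ≤ r →
          l2norm (G z₁ - G z₂) ≤ L * l2norm (z₁ - z₂)) →
      ∀ (x p : Fin n → ℝ) (η : Fin m → ℝ),
        InRange G r p →
        (∀ w, InRange G r w → l2norm (p - x) ≤ l2norm (w - x)) →
      ∀ (Ω : Type) [MeasurableSpace Ω] (P : Measure Ω) [IsProbabilityMeasure P]
        (A : Ω → Fin m → Fin n → ℝ), Measurable A → IIDStdGaussian P m n A →
      ∀ q : Ω → Fin n → ℝ,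
        (∀ ω, InRange G r (q ω)) →
        (∀ ω w, InRange G r w →
          (l2norm fun i => (|A ω i ⬝ᵥ x| + η i) - |A ω i ⬝ᵥ q ω|) ^ 2 ≤
            (l2norm fun i => (|A ω i ⬝ᵥ x| + η i) - |A ω i ⬝ᵥ w|) ^ 2 + τ) →
      (m : ℝ) ≥ C * (k : ℝ) * Real.log (L * r / δ) →
      P {ω | min (l2norm (q ω - x)) (l2norm (q ω + x)) ≤
              C' * (l2norm (p - x) + (l2norm η + Real.sqrt τ) / Real.sqrt m + δ)} ≥
        ENNReal.ofReal (1 - Real.exp (-c * m)) := by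
  refine ⟨1, 1, 10 ^ 5, one_pos, one_pos, by positivity, ?_⟩
  intro k n m L r δ τ hL _ hδ hτ G hG x p η hp _ Ω _ P _ A hA hlaw q hq hopt hm
  lift L to NNReal using hL.le
  have hrecovery := stmt_0_general (hlaw.hasLaw hA) (lipschitzOnWith_euclideanMap hG) hδ
    (by simpa using hm) (WithLp.toLp 2 x) (inRange_iff.1 hp)
  rw [Fintype.card_fin, ← neg_one_mul] at hrecovery
  refine hrecovery.trans (measure_mono fun ω hω ↦ ?_)
  have hloss := hopt ω p hp
  simp only [l2norm_eq_norm_toLp] at hloss ⊢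
  refine hω _ τ hτ.le _ (inRange_iff.1 (hq ω)) ?_
  simp only [← toLp_abs_dotProduct]
  exact hloss
end

section
/- Let X₁, …, X_m be i.i.d. standard normal random variables and let |X|_{(1)} ≤ |X|_{(2)} ≤ … ≤ |X|_{(m)} denote the order statistics of |X₁|, …, |X_m|. There exists a constant μ ≥ (1/18)√(π/2) and a universal constant c > 0 such that for every ε with 0 ≤ ε ≤ μ, with probability at least 1 − e^{−c m ε²}: √m (μ − ε) < ( ∑_{i=1}^{⌈m/2⌉} |X|_{(i)}² )^{1/2} < √m (μ + ε). -/
open MeasureTheory ProbabilityTheory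

/-- `X : Ω → ℝ^m` has i.i.d. standard normal coordinates. -/
def IIDStdGaussianVec {Ω : Type} [MeasurableSpace Ω] (P : Measure Ω) (m : ℕ)
    (X : Ω → Fin m → ℝ) : Prop :=
  Measure.map X P = Measure.pi fun _ : Fin m => gaussianReal 0 1

open Filter Set
open scoped ENNReal NNReal

/-!
Let `n` be the number of coordinates, `q` the median of the absolute value of a standard normal
variable, and `μ ^ 2` the second moment of that variable truncated to `[-q, q]`.

For deviations `t` beyond a constant `T`, the sum of the `⌈n / 2⌉` smallest squares is sandwiched
between sums of i.i.d. bounded variables: from below by weak duality with threshold `q`, from above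
by summing over the coordinates in `[-q, q]` and correcting for their number. Hoeffding's inequality
applies to both, and the factor in front of the exponential is absorbed by halving the exponent.

Below `T` that factor makes the tail bound vacuous. There it is enough that the square root of the
sum lies within `t` of `√n * μ` with probability at least `c * t`, which dominates
`1 - exp (-c' * t ^ 2)`. This comes from comparing the Gaussian measure with its dilations by
`exp (b / √n)`.
-/

section SmallestSqSum

variable {ι : Type*} {k : ℕ} {x : ι → ℝ}

/-- The sum of the `k` smallest squares `x i ^ 2`, encoded as the minimum of `∑ i ∈ I, x i ^ 2` over
the index sets `I` with `k` elements. It is `0` if there are fewer than `k` indices. -/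
noncomputable def smallestSqSum (k : ℕ) (x : ι → ℝ) : ℝ :=
  ⨅ I : {I : Finset ι // I.card = k}, ∑ i ∈ I.1, x i ^ 2

lemma smallestSqSum_le {I : Finset ι} (hI : I.card = k) :
    smallestSqSum k x ≤ ∑ i ∈ I, x i ^ 2 :=
  ciInf_le ⟨0, forall_mem_range.2 fun _ ↦ Finset.sum_nonneg fun _ _ ↦ sq_nonneg _⟩
    (⟨I, hI⟩ : {I : Finset ι // I.card = k})

@[fun_prop]
lemma measurable_smallestSqSum [Countable ι] (k : ℕ) :
    Measurable (smallestSqSum k : (ι → ℝ) → ℝ) :=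
  Measurable.iInf fun _ ↦ by fun_prop

lemma smallestSqSum_smul (k : ℕ) (c : ℝ) (x : ι → ℝ) :
    smallestSqSum k (c • x) = c ^ 2 * smallestSqSum k x := by
  simp only [smallestSqSum, Pi.smul_apply, smul_eq_mul, mul_pow, ← Finset.mul_sum,
    Real.mul_iInf_of_nonneg (sq_nonneg c)]

lemma smallestSqSum_nonneg (k : ℕ) (x : ι → ℝ) : 0 ≤ smallestSqSum k x :=
  Real.iInf_nonneg fun _ ↦ Finset.sum_nonneg fun _ _ ↦ sq_nonneg _

/-- Starting from `S`, discard surplus indices, or add indices of `T` at a cost of at most `b`. -/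
lemma smallestSqSum_le_sum_add_max {S T : Finset ι} (hST : S ⊆ T) (hkT : k ≤ T.card) {b : ℝ}
    (hb0 : 0 ≤ b) (hb : ∀ i ∈ T, x i ^ 2 ≤ b) :
    smallestSqSum k x ≤ ∑ i ∈ S, x i ^ 2 + max 0 ((k : ℝ) - S.card) * b := by
  rcases le_total k S.card with hkS | hSk
  · obtain ⟨I, hIS, hI⟩ := Finset.exists_subset_card_eq hkS
    calc smallestSqSum k x ≤ ∑ i ∈ I, x i ^ 2 := smallestSqSum_le hI
      _ ≤ ∑ i ∈ S, x i ^ 2 := Finset.sum_le_sum_of_subset_of_nonneg hIS fun _ _ _ ↦ sq_nonneg _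
      _ ≤ _ := le_add_of_nonneg_right (by positivity)
  · obtain ⟨I, hSI, hIT, hI⟩ := Finset.exists_subsuperset_card_eq hST hSk hkT
    classical
    calc smallestSqSum k x ≤ ∑ i ∈ I, x i ^ 2 := smallestSqSum_le hI
      _ = ∑ i ∈ S, x i ^ 2 + ∑ i ∈ I \ S, x i ^ 2 := by rw [add_comm, Finset.sum_sdiff hSI]
      _ ≤ ∑ i ∈ S, x i ^ 2 + (I \ S).card * b := by
        gcongr
        rw [← nsmul_eq_mul]
        exact Finset.sum_le_card_nsmul _ _ _ fun i hi ↦ hb i (hIT (Finset.mem_sdiff.1 hi).1)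
      _ ≤ _ := by
        rw [Finset.card_sdiff_of_subset hSI, hI, Nat.cast_sub hSk]
        gcongr
        exact le_max_right _ _

variable [Fintype ι]

lemma exists_sum_sq_eq_smallestSqSum (hk : k ≤ Fintype.card ι) (x : ι → ℝ) :
    ∃ I : Finset ι, I.card = k ∧ ∑ i ∈ I, x i ^ 2 = smallestSqSum k x := by
  obtain ⟨I, -, hI⟩ := Finset.exists_subset_card_eq (s := (Finset.univ : Finset ι)) hk
  have : Nonempty {I : Finset ι // I.card = k} := ⟨I, hI⟩
  obtain ⟨⟨J, hJ⟩, hmin⟩ :=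
    exists_eq_ciInf_of_finite (f := fun I : {I : Finset ι // I.card = k} ↦ ∑ i ∈ I.1, x i ^ 2)
  exact ⟨J, hJ, hmin⟩

lemma smallestSqSum_pos (hk0 : 0 < k) (hk : k ≤ Fintype.card ι) (hx : ∀ i, x i ≠ 0) :
    0 < smallestSqSum k x := by
  obtain ⟨I, hI, hsum⟩ := exists_sum_sq_eq_smallestSqSum hk x
  rw [← hsum]
  exact Finset.sum_pos (fun i _ ↦ sq_pos_of_ne_zero (hx i)) (Finset.card_pos.1 (hI ▸ hk0))

-- Weak duality: every threshold `q` bounds the constrained minimum from below.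
lemma mul_sq_sub_sum_indicator_le_smallestSqSum (hk : k ≤ Fintype.card ι) {q : ℝ} (hq : 0 ≤ q)
    (x : ι → ℝ) :
    k * q ^ 2 - ∑ i, (Icc (-q) q).indicator (fun y ↦ q ^ 2 - y ^ 2) (x i) ≤ smallestSqSum k x := by
  obtain ⟨I, rfl, hsum⟩ := exists_sum_sq_eq_smallestSqSum hk x
  set f : ℝ → ℝ := (Icc (-q) q).indicator fun y ↦ q ^ 2 - y ^ 2
  have hf_nonneg : ∀ y, 0 ≤ f y :=
    indicator_nonneg fun y hy ↦ sub_nonneg.2 (sq_le_sq' hy.1 hy.2)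
  have hf_le (y : ℝ) : q ^ 2 - f y ≤ y ^ 2 := by
    by_cases hy : y ∈ Icc (-q) q
    · simp [f, hy]
    · have hqy : q < |y| := not_le.1 fun h ↦ hy (abs_le.1 h)
      simpa [f, hy] using pow_le_pow_left₀ hq hqy.le 2
  calc I.card * q ^ 2 - ∑ i, f (x i) ≤ I.card * q ^ 2 - ∑ i ∈ I, f (x i) := by
        gcongr
        · exact fun _ _ _ ↦ hf_nonneg _
        · exact Finset.subset_univ I
    _ = ∑ i ∈ I, (q ^ 2 - f (x i)) := by rw [Finset.sum_sub_distrib, Finset.sum_const, nsmul_eq_mul]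
    _ ≤ ∑ i ∈ I, x i ^ 2 := Finset.sum_le_sum fun i _ ↦ hf_le (x i)
    _ = _ := hsum

end SmallestSqSum

section SumsOfIID

variable {ι α : Type*} [Fintype ι] [MeasurableSpace α] {ν : Measure α} [IsProbabilityMeasure ν]

lemma measureReal_pi_add_le_sum_le {f : α → ℝ} (hf : Measurable f) {a b : ℝ}
    (hab : ∀ y, f y ∈ Icc a b) {s : ℝ} (hs : 0 ≤ s) :
    (Measure.pi fun _ : ι ↦ ν).real {x | Fintype.card ι * ∫ y, f y ∂ν + s ≤ ∑ i, f (x i)} ≤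
      Real.exp (-(2 * s ^ 2 / (Fintype.card ι * (b - a) ^ 2))) := by
  have hsub : HasSubgaussianMGF (fun y ↦ f y - ∫ y, f y ∂ν) ((‖b - a‖₊ / 2) ^ 2) ν :=
    hasSubgaussianMGF_of_mem_Icc hf.aemeasurable (.of_forall hab)
  have hindep : iIndepFun (fun (i : ι) (x : ι → α) ↦ f (x i) - ∫ y, f y ∂ν)
      (Measure.pi fun _ ↦ ν) :=
    iIndepFun_pi (X := fun _ y ↦ f y - ∫ y, f y ∂ν) fun _ ↦ by fun_prop
  have hsub' (i : ι) : HasSubgaussianMGF (fun x : ι → α ↦ f (x i) - ∫ y, f y ∂ν)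
      ((‖b - a‖₊ / 2) ^ 2) (Measure.pi fun _ ↦ ν) := by
    have heval := measurePreserving_eval (fun _ : ι ↦ ν) i
    have hmap : HasSubgaussianMGF (fun y ↦ f y - ∫ y, f y ∂ν) ((‖b - a‖₊ / 2) ^ 2)
        ((Measure.pi fun _ : ι ↦ ν).map (Function.eval i)) := by
      rwa [heval.map_eq]
    exact hmap.of_map heval.measurable.aemeasurable
  have hHoeffding := HasSubgaussianMGF.measure_sum_ge_le_of_iIndepFun hindep
    (s := Finset.univ) (fun i _ ↦ hsub' i) hs
  simp only [Finset.sum_sub_distrib, Finset.sum_const, Finset.card_univ, nsmul_eq_mul,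
    le_sub_iff_add_le'] at hHoeffding
  refine hHoeffding.trans_eq ?_
  push_cast
  rw [Real.norm_eq_abs, div_pow, sq_abs, neg_div]
  congr 2
  field_simp

lemma measureReal_pi_sum_le_sub_le {f : α → ℝ} (hf : Measurable f) {a b : ℝ}
    (hab : ∀ y, f y ∈ Icc a b) {s : ℝ} (hs : 0 ≤ s) :
    (Measure.pi fun _ : ι ↦ ν).real {x | ∑ i, f (x i) ≤ Fintype.card ι * ∫ y, f y ∂ν - s} ≤
      Real.exp (-(2 * s ^ 2 / (Fintype.card ι * (b - a) ^ 2))) := by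
  have hneg := measureReal_pi_add_le_sum_le (ι := ι) (ν := ν) hf.neg (a := -b) (b := -a)
    (fun y ↦ ⟨neg_le_neg (hab y).2, neg_le_neg (hab y).1⟩) hs
  simp only [Pi.neg_apply, integral_neg, Finset.sum_neg_distrib, neg_sub_neg] at hneg
  convert hneg using 4
  constructor <;> intro h <;> linarith

lemma measureReal_pi_card_filter_mem_le {B : Set α} [DecidablePred (· ∈ B)] (hB : MeasurableSet B)
    {s : ℝ} (hs : 0 ≤ s) :
    (Measure.pi fun _ : ι ↦ ν).real
        {x | ((Finset.univ.filter fun i ↦ x i ∈ B).card : ℝ) ≤ Fintype.card ι * ν.real B - s} ≤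
      Real.exp (-(2 * s ^ 2 / Fintype.card ι)) := by
  have hbound (y : α) : B.indicator (1 : α → ℝ) y ∈ Icc 0 1 :=
    ⟨indicator_nonneg (fun _ _ ↦ zero_le_one) y, indicator_le_self' (fun _ _ ↦ zero_le_one) y⟩
  have hHoeffding :=
    measureReal_pi_sum_le_sub_le (ι := ι) (ν := ν) (measurable_one.indicator hB) hbound hs
  rw [integral_indicator_one hB] at hHoeffding
  simpa [indicator_apply] using hHoeffding

lemma measureReal_pi_lt_abs_sum_sub_le [Nonempty ι] {f : α → ℝ} (hf : MemLp f 2 ν) {K : ℝ}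
    (hK : 0 < K) :
    (Measure.pi fun _ : ι ↦ ν).real {x | K * √(Fintype.card ι) <
      |∑ i, f (x i) - Fintype.card ι * ∫ y, f y ∂ν|} ≤ Var[f; ν] / K ^ 2 := by
  have hmem (i : ι) : MemLp (fun x : ι → α ↦ f (x i)) 2 (Measure.pi fun _ ↦ ν) :=
    hf.comp_measurePreserving (measurePreserving_eval _ i)
  have hmean : ∫ x : ι → α, (∑ i, f (x i)) ∂(Measure.pi fun _ ↦ ν) =
      Fintype.card ι * ∫ y, f y ∂ν := by
    rw [integral_finsetSum _ fun i _ ↦ (hmem i).integrable one_le_two]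
    simp [integral_comp_eval (μ := fun _ : ι ↦ ν) hf.aestronglyMeasurable]
  have hvar : Var[fun x : ι → α ↦ ∑ i, f (x i); Measure.pi fun _ ↦ ν] =
      Fintype.card ι * Var[f; ν] := by
    have := variance_sum_pi (X := fun _ : ι ↦ f) fun _ ↦ hf
    simpa [Finset.sum_fn] using this
  have hcard : (0 : ℝ) < Fintype.card ι := by exact_mod_cast Fintype.card_pos
  have hChebyshev := meas_ge_le_variance_div_sq
    (memLp_finsetSum Finset.univ fun i _ ↦ hmem i) (c := K * √(Fintype.card ι)) (by positivity)
  rw [hmean, hvar, mul_pow, Real.sq_sqrt hcard.le, mul_comm (K ^ 2),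
    mul_div_mul_left _ _ hcard.ne'] at hChebyshev
  refine ENNReal.toReal_le_of_le_ofReal (div_nonneg (variance_nonneg f ν) (sq_nonneg K))
    (le_trans (measure_mono ?_) hChebyshev)
  exact fun x hx ↦ le_of_lt (mem_ofPred.1 hx)

end SumsOfIID

section SmallestSqSumTails

variable {ι : Type*} [Fintype ι] {k : ℕ} {ν : Measure ℝ} [IsProbabilityMeasure ν] {q s : ℝ}

lemma measureReal_pi_smallestSqSum_le_sub_le (hk : k ≤ Fintype.card ι) (hq : 0 ≤ q)
    (hqk : Fintype.card ι * ν.real (Icc (-q) q) ≤ k) (hs : 0 ≤ s) :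
    (Measure.pi fun _ : ι ↦ ν).real
        {x | smallestSqSum k x ≤ Fintype.card ι * ∫ y in Icc (-q) q, y ^ 2 ∂ν - s} ≤
      Real.exp (-(2 * s ^ 2 / (Fintype.card ι * (q ^ 2) ^ 2))) := by
  have hf : Measurable ((Icc (-q) q).indicator fun y ↦ q ^ 2 - y ^ 2) :=
    Measurable.indicator (by fun_prop) measurableSet_Icc
  have hf_mem (y : ℝ) : (Icc (-q) q).indicator (fun y ↦ q ^ 2 - y ^ 2) y ∈ Icc 0 (q ^ 2) :=
    ⟨indicator_nonneg (fun z hz ↦ sub_nonneg.2 (sq_le_sq' hz.1 hz.2)) y,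
      indicator_le' (fun z _ ↦ sub_le_self _ (sq_nonneg z)) (fun _ _ ↦ sq_nonneg q) y⟩
  have hf_int : ∫ y, (Icc (-q) q).indicator (fun y ↦ q ^ 2 - y ^ 2) y ∂ν =
      q ^ 2 * ν.real (Icc (-q) q) - ∫ y in Icc (-q) q, y ^ 2 ∂ν := by
    rw [integral_indicator measurableSet_Icc, integral_sub (integrable_const _)
      (ContinuousOn.integrableOn_Icc (by fun_prop)), setIntegral_const, smul_eq_mul, mul_comm]
  have hHoeffding := measureReal_pi_add_le_sum_le (ι := ι) (ν := ν) hf hf_mem hs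
  rw [sub_zero, hf_int] at hHoeffding
  refine (measureReal_mono fun x hx ↦ ?_).trans hHoeffding
  have hdual := mul_sq_sub_sum_indicator_le_smallestSqSum hk hq x
  have hx : smallestSqSum k x ≤ Fintype.card ι * ∫ y in Icc (-q) q, y ^ 2 ∂ν - s := hx
  rw [mem_ofPred]
  linarith [mul_le_mul_of_nonneg_right hqk (sq_nonneg q)]

lemma smallestSqSum_lt_add (hk : 2 * k ≤ Fintype.card ι + 1) {Q V : ℝ} {x : ι → ℝ} (hQ : 0 < Q)
    (hqQ : q ≤ Q) (hs : Q ^ 2 ≤ s)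
    (hsum : ∑ i, (Icc (-q) q).indicator (fun y ↦ y ^ 2) (x i) < V + s / 4)
    (hcard : Fintype.card ι / 2 - s / (4 * Q ^ 2) <
      (Finset.univ.filter fun i ↦ x i ∈ Icc (-q) q).card)
    (hcard' : (Fintype.card ι / 2 : ℝ) < (Finset.univ.filter fun i ↦ x i ∈ Icc (-Q) Q).card) :
    smallestSqSum k x < V + s := by
  set S := Finset.univ.filter fun i ↦ x i ∈ Icc (-q) q
  set T := Finset.univ.filter fun i ↦ x i ∈ Icc (-Q) Q
  have hST : S ⊆ T :=
    Finset.monotone_filter_right _ fun _ _ h ↦ Icc_subset_Icc (neg_le_neg hqQ) hqQ h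
  have hkT : k ≤ T.card := by
    have : Fintype.card ι < 2 * T.card := by
      rify
      linarith
    lia
  have hT : ∀ i ∈ T, x i ^ 2 ≤ Q ^ 2 := fun i hi ↦ by
    have := (Finset.mem_filter.1 hi).2
    exact sq_le_sq' this.1 this.2
  have hS : ∑ i ∈ S, x i ^ 2 < V + s / 4 := by
    simpa only [S, Finset.sum_filter, indicator_apply] using hsum
  have hdeficit : max 0 ((k : ℝ) - S.card) * Q ^ 2 ≤ Q ^ 2 / 2 + s / 4 := by
    have hk : (2 * k : ℝ) ≤ Fintype.card ι + 1 := by exact_mod_cast hk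
    have hs0 : 0 ≤ s / (4 * Q ^ 2) := by have := (sq_nonneg Q).trans hs; positivity
    calc max 0 ((k : ℝ) - S.card) * Q ^ 2 ≤ (1 / 2 + s / (4 * Q ^ 2)) * Q ^ 2 := by
          gcongr
          exact max_le (by positivity) (by linarith)
      _ = _ := by field_simp
  linarith [smallestSqSum_le_sum_add_max hST hkT (sq_nonneg Q) hT]

lemma measureReal_pi_add_le_smallestSqSum_le (hk : 2 * k ≤ Fintype.card ι + 1) {Q : ℝ}
    (hQ : 0 < Q) (hq : 0 ≤ q) (hqQ : q ≤ Q) (hνq : 1 / 2 ≤ ν.real (Icc (-q) q))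
    (hνQ : 3 / 4 ≤ ν.real (Icc (-Q) Q)) (hs : Q ^ 2 ≤ s) :
    (Measure.pi fun _ : ι ↦ ν).real
        {x | Fintype.card ι * ∫ y in Icc (-q) q, y ^ 2 ∂ν + s ≤ smallestSqSum k x} ≤
      2 * Real.exp (-(s ^ 2 / (8 * Fintype.card ι * Q ^ 4))) +
        Real.exp (-(Fintype.card ι / 8)) := by
  set V := ∫ y in Icc (-q) q, y ^ 2 ∂ν with hV
  have hs0 : 0 ≤ s := (sq_nonneg Q).trans hs
  have hf_mem (y : ℝ) : (Icc (-q) q).indicator (fun y ↦ y ^ 2) y ∈ Icc 0 (Q ^ 2) :=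
    ⟨indicator_nonneg (fun z _ ↦ sq_nonneg z) y, indicator_le' (fun z hz ↦
      (sq_le_sq' hz.1 hz.2).trans (pow_le_pow_left₀ hq hqQ 2)) (fun _ _ ↦ sq_nonneg Q) y⟩
  have hsum := measureReal_pi_add_le_sum_le (ι := ι) (ν := ν)
    (Measurable.indicator (by fun_prop) measurableSet_Icc) hf_mem (s := s / 4) (by positivity)
  have hcard := measureReal_pi_card_filter_mem_le (ι := ι) (ν := ν)
    (measurableSet_Icc (a := -q) (b := q)) (s := s / (4 * Q ^ 2)) (by positivity)
  have hcard' := measureReal_pi_card_filter_mem_le (ι := ι) (ν := ν)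
    (measurableSet_Icc (a := -Q) (b := Q)) (s := Fintype.card ι / 4) (by positivity)
  rw [integral_indicator measurableSet_Icc, sub_zero, ← hV,
    show 2 * (s / 4) ^ 2 / (Fintype.card ι * (Q ^ 2) ^ 2) =
      s ^ 2 / (8 * Fintype.card ι * Q ^ 4) by ring] at hsum
  rw [show 2 * (s / (4 * Q ^ 2)) ^ 2 / Fintype.card ι =
      s ^ 2 / (8 * Fintype.card ι * Q ^ 4) by ring] at hcard
  rw [show 2 * (Fintype.card ι / 4 : ℝ) ^ 2 / Fintype.card ι = Fintype.card ι / 8 by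
    field_simp; ring] at hcard'
  rw [two_mul]
  refine (measureReal_mono (fun x hx ↦ ?_)).trans <| (measureReal_union_le _ _).trans <|
    add_le_add ((measureReal_union_le _ _).trans (add_le_add hsum hcard)) hcard'
  contrapose! hx
  simp only [mem_union, mem_ofPred, not_or, not_le] at hx ⊢
  obtain ⟨⟨hx_sum, hx_card⟩, hx_card'⟩ := hx
  have hn : (0 : ℝ) ≤ Fintype.card ι := Nat.cast_nonneg _
  refine smallestSqSum_lt_add hk hQ hqQ hs hx_sum (lt_of_le_of_lt ?_ hx_card)
    (lt_of_le_of_lt ?_ hx_card')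
  · linarith [mul_le_mul_of_nonneg_left hνq hn]
  · linarith [mul_le_mul_of_nonneg_left hνQ hn]

end SmallestSqSumTails

section HalfNorm

variable {ι : Type*} [Fintype ι]

/-- The Euclidean norm of the half of the coordinates (rounded up) with the smallest absolute
values, that is `(∑ i ≤ ⌈n / 2⌉, |x|₍ᵢ₎ ^ 2) ^ (1 / 2)` for `n` coordinates. -/
noncomputable def halfNorm (x : ι → ℝ) : ℝ :=
  √(smallestSqSum ((Fintype.card ι + 1) / 2) x)

@[fun_prop]
lemma measurable_halfNorm : Measurable (halfNorm : (ι → ℝ) → ℝ) := by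
  unfold halfNorm
  fun_prop

lemma half_card_le_card : (Fintype.card ι + 1) / 2 ≤ Fintype.card ι := by lia

lemma sq_halfNorm (x : ι → ℝ) :
    halfNorm x ^ 2 = smallestSqSum ((Fintype.card ι + 1) / 2) x :=
  Real.sq_sqrt (smallestSqSum_nonneg _ _)

lemma halfNorm_smul {c : ℝ} (hc : 0 ≤ c) (x : ι → ℝ) : halfNorm (c • x) = c * halfNorm x := by
  rw [halfNorm, halfNorm, smallestSqSum_smul, Real.sqrt_mul (sq_nonneg c), Real.sqrt_sq hc]

lemma halfNorm_pos [Nonempty ι] {x : ι → ℝ} (hx : ∀ i, x i ≠ 0) : 0 < halfNorm x :=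
  Real.sqrt_pos.2 <| smallestSqSum_pos (by have := Fintype.card_pos (α := ι); lia)
    half_card_le_card hx

lemma lt_halfNorm_iff {a : ℝ} {x : ι → ℝ} :
    a < halfNorm x ↔
      ∀ I : Finset ι, I.card = (Fintype.card ι + 1) / 2 → a < √(∑ i ∈ I, x i ^ 2) := by
  refine ⟨fun h I hI ↦ h.trans_le (Real.sqrt_le_sqrt (smallestSqSum_le hI)), fun h ↦ ?_⟩
  obtain ⟨I, hI, hsum⟩ := exists_sum_sq_eq_smallestSqSum half_card_le_card x
  rw [halfNorm, ← hsum]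
  exact h I hI

lemma halfNorm_lt_iff {a : ℝ} {x : ι → ℝ} :
    halfNorm x < a ↔
      ∃ I : Finset ι, I.card = (Fintype.card ι + 1) / 2 ∧ √(∑ i ∈ I, x i ^ 2) < a := by
  constructor
  · intro h
    obtain ⟨I, hI, hsum⟩ := exists_sum_sq_eq_smallestSqSum half_card_le_card x
    exact ⟨I, hI, by rwa [hsum]⟩
  · rintro ⟨I, hI, h⟩
    exact (Real.sqrt_le_sqrt (smallestSqSum_le hI)).trans_lt h

variable {ν : Measure ℝ} [IsProbabilityMeasure ν] {q Q μ t : ℝ}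

lemma setIntegral_Icc_sq_le :
    ∫ y in Icc (-q) q, y ^ 2 ∂ν ≤ q ^ 2 * ν.real (Icc (-q) q) := by
  have hint : IntegrableOn (fun y : ℝ ↦ y ^ 2) (Icc (-q) q) ν :=
    ContinuousOn.integrableOn_Icc (by fun_prop)
  calc ∫ y in Icc (-q) q, y ^ 2 ∂ν ≤ ∫ _ in Icc (-q) q, q ^ 2 ∂ν :=
        setIntegral_mono_on hint (integrable_const _) measurableSet_Icc
          fun y hy ↦ sq_le_sq' hy.1 hy.2
    _ = q ^ 2 * ν.real (Icc (-q) q) := by rw [setIntegral_const, smul_eq_mul, mul_comm]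

lemma measureReal_pi_halfNorm_le_sub_le (hq : 0 < q) (hνq : ν.real (Icc (-q) q) ≤ 1 / 2)
    (hμ : ∫ y in Icc (-q) q, y ^ 2 ∂ν = μ ^ 2) (hμ0 : 0 ≤ μ) (ht0 : 0 ≤ t)
    (ht : t ≤ √(Fintype.card ι) * μ) :
    (Measure.pi fun _ : ι ↦ ν).real {x | halfNorm x ≤ √(Fintype.card ι) * μ - t} ≤
      Real.exp (-(2 * μ ^ 2 / q ^ 4 * t ^ 2)) := by
  rcases isEmpty_or_nonempty ι with hι | hι
  · obtain rfl : t = 0 := ht0.antisymm' (by simpa using ht)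
    simp [measureReal_le_one]
  have hn : (0 : ℝ) < Fintype.card ι := by exact_mod_cast Fintype.card_pos
  have hr : √(Fintype.card ι : ℝ) ^ 2 = Fintype.card ι := Real.sq_sqrt hn.le
  have hqk : Fintype.card ι * ν.real (Icc (-q) q) ≤ ((Fintype.card ι + 1) / 2 : ℕ) := by
    have : (Fintype.card ι : ℝ) ≤ 2 * ((Fintype.card ι + 1) / 2 : ℕ) := by norm_cast; lia
    linarith [mul_le_mul_of_nonneg_left hνq hn.le]
  have htail := measureReal_pi_smallestSqSum_le_sub_le half_card_le_card hq.le hqk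
    (s := √(Fintype.card ι) * μ * t) (by positivity)
  have hexp : 2 * (√(Fintype.card ι) * μ * t) ^ 2 / (Fintype.card ι * (q ^ 2) ^ 2) =
      2 * μ ^ 2 / q ^ 4 * t ^ 2 := by
    rw [mul_pow, mul_pow, hr]
    field_simp
  rw [hμ, hexp] at htail
  refine (measureReal_mono fun x hx ↦ ?_).trans htail
  have hx : halfNorm x ^ 2 ≤ (√(Fintype.card ι) * μ - t) ^ 2 :=
    pow_le_pow_left₀ (Real.sqrt_nonneg _) hx 2
  rw [sq_halfNorm] at hx
  rw [mem_ofPred]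
  nlinarith [mul_le_mul_of_nonneg_right ht ht0]

lemma measureReal_pi_add_le_halfNorm_le (hQ : 0 < Q) (hq : 0 ≤ q) (hqQ : q ≤ Q)
    (hνq : 1 / 2 ≤ ν.real (Icc (-q) q)) (hνQ : 3 / 4 ≤ ν.real (Icc (-Q) Q))
    (hμ : ∫ y in Icc (-q) q, y ^ 2 ∂ν = μ ^ 2) (hμ0 : 0 ≤ μ)
    (ht : Q ^ 2 ≤ 2 * √(Fintype.card ι) * μ * t) :
    (Measure.pi fun _ : ι ↦ ν).real {x | √(Fintype.card ι) * μ + t ≤ halfNorm x} ≤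
      2 * Real.exp (-(μ ^ 2 / (2 * Q ^ 4) * t ^ 2)) + Real.exp (-(Fintype.card ι / 8)) := by
  have hpos : 0 < 2 * √(Fintype.card ι) * μ * t := (sq_pos_of_pos hQ).trans_le ht
  have ht0 : 0 ≤ t := (pos_of_mul_pos_right hpos (by positivity)).le
  have hn : (0 : ℝ) < Fintype.card ι := by
    refine (Nat.cast_nonneg _).lt_of_ne fun h ↦ ?_
    simp [← h] at hpos
  have hr : √(Fintype.card ι : ℝ) ^ 2 = Fintype.card ι := Real.sq_sqrt hn.le
  have htail := measureReal_pi_add_le_smallestSqSum_le (ι := ι)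
    (k := (Fintype.card ι + 1) / 2) (by lia) hQ hq hqQ hνq hνQ ht
  have hexp : (2 * √(Fintype.card ι) * μ * t) ^ 2 / (8 * Fintype.card ι * Q ^ 4) =
      μ ^ 2 / (2 * Q ^ 4) * t ^ 2 := by
    rw [mul_pow, mul_pow, mul_pow, hr]
    field_simp
    ring
  rw [hμ, hexp] at htail
  refine (measureReal_mono fun x hx ↦ ?_).trans htail
  have hx : (√(Fintype.card ι) * μ + t) ^ 2 ≤ halfNorm x ^ 2 :=
    pow_le_pow_left₀ (by positivity) hx 2
  rw [sq_halfNorm] at hx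
  rw [mem_ofPred]
  nlinarith [sq_nonneg t]

theorem measureReal_pi_le_abs_halfNorm_sub_le (hq : 0 < q) (hqQ : q ≤ Q)
    (hνq : ν.real (Icc (-q) q) = 1 / 2) (hνQ : 3 / 4 ≤ ν.real (Icc (-Q) Q))
    (hμ : ∫ y in Icc (-q) q, y ^ 2 ∂ν = μ ^ 2) (hμ0 : 0 < μ)
    (htQ : Q ^ 2 ≤ 2 * √(Fintype.card ι) * μ * t) (ht : t ≤ √(Fintype.card ι) * μ) :
    (Measure.pi fun _ : ι ↦ ν).real {x | t ≤ |halfNorm x - √(Fintype.card ι) * μ|} ≤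
      4 * Real.exp (-(μ ^ 2 / (2 * Q ^ 4) * t ^ 2)) := by
  have hQ : 0 < Q := hq.trans_le hqQ
  have ht0 : 0 ≤ t :=
    (pos_of_mul_pos_right ((sq_pos_of_pos hQ).trans_le htQ) (by positivity)).le
  have hlower := measureReal_pi_halfNorm_le_sub_le (ι := ι) hq hνq.le hμ hμ0.le ht0 ht
  have hupper := measureReal_pi_add_le_halfNorm_le (ι := ι) hQ hq.le hqQ hνq.ge hνQ hμ hμ0.le htQ
  have hlower_exp : μ ^ 2 / (2 * Q ^ 4) * t ^ 2 ≤ 2 * μ ^ 2 / q ^ 4 * t ^ 2 := by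
    have hqQ4 : q ^ 4 ≤ 2 * Q ^ 4 :=
      (pow_le_pow_left₀ hq.le hqQ 4).trans (le_mul_of_one_le_left (by positivity) one_le_two)
    gcongr
    linarith [sq_nonneg μ]
  have hupper_exp : μ ^ 2 / (2 * Q ^ 4) * t ^ 2 ≤ (Fintype.card ι : ℝ) / 8 := by
    have hμQ : 2 * μ ^ 2 ≤ Q ^ 2 := by
      have := setIntegral_Icc_sq_le (ν := ν) (q := q)
      rw [hμ, hνq] at this
      linarith [pow_le_pow_left₀ hq.le hqQ 2]
    calc μ ^ 2 / (2 * Q ^ 4) * t ^ 2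
        ≤ μ ^ 2 / (2 * (2 * μ ^ 2) ^ 2) * (√(Fintype.card ι) * μ) ^ 2 := by
          rw [show Q ^ 4 = (Q ^ 2) ^ 2 by ring]
          gcongr
      _ = (Fintype.card ι : ℝ) / 8 := by
          rw [mul_pow √_, Real.sq_sqrt (Nat.cast_nonneg _)]
          field_simp
          ring
  have hsubset : {x : ι → ℝ | t ≤ |halfNorm x - √(Fintype.card ι) * μ|} ⊆
      {x | halfNorm x ≤ √(Fintype.card ι) * μ - t} ∪
        {x | √(Fintype.card ι) * μ + t ≤ halfNorm x} := fun x hx ↦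
    (le_abs'.1 (mem_ofPred.1 hx)).imp (fun h ↦ by rw [mem_ofPred]; linarith)
      (fun h ↦ by rw [mem_ofPred]; linarith)
  refine (measureReal_mono hsubset).trans ((measureReal_union_le _ _).trans ?_)
  linarith [Real.exp_le_exp.2 (neg_le_neg hlower_exp), Real.exp_le_exp.2 (neg_le_neg hupper_exp)]

end HalfNorm

lemma exists_forall_measure_lt_abs_le {Ω : ℕ → Type*} [∀ m, MeasurableSpace (Ω m)]
    {P : ∀ m, Measure (Ω m)} [∀ m, IsFiniteMeasure (P m)] {h : ∀ m, Ω m → ℝ}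
    (hh : ∀ m, Measurable (h m)) {δ : ℝ≥0∞} (hδ : 0 < δ) {L₀ : ℝ}
    (hL₀ : ∀ᶠ m in atTop, P m {ω | L₀ < |h m ω|} ≤ δ) :
    ∃ L, ∀ m, P m {ω | L < |h m ω|} ≤ δ := by
  have hsingle (m : ℕ) : ∀ᶠ L in atTop, P m {ω | L < |h m ω|} ≤ δ := by
    have htight := tendsto_measure_norm_gt_of_isTightMeasureSet
      (isTightMeasureSet_singleton (μ := (P m).map (h m)))
    simp only [mem_singleton_iff, iSup_iSup_eq_left] at htight
    filter_upwards [htight.eventually_le_const hδ] with L hL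
    rwa [Measure.map_apply (hh m) (measurableSet_lt (by fun_prop) (by fun_prop))] at hL
  obtain ⟨m₀, hm₀⟩ := eventually_atTop.1 hL₀
  obtain ⟨L, hL, hLL₀⟩ := (((Finset.range m₀).eventually_all.2 fun m _ ↦ hsingle m).and
    (eventually_ge_atTop L₀)).exists
  refine ⟨L, fun m ↦ ?_⟩
  rcases lt_or_ge m m₀ with hm | hm
  · exact hL m (Finset.mem_range.2 hm)
  · exact (measure_mono fun ω hω ↦ lt_of_le_of_lt hLL₀ hω).trans (hm₀ m hm)

lemma mul_measure_le_mul_measure_univ_of_sections {α β : Type*} [MeasurableSpace α]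
    [MeasurableSpace β] {μ : Measure α} {ν : Measure β} [SFinite μ] [SFinite ν] {S : Set (α × β)}
    (hS : MeasurableSet S) {N : Set β} {ℓ p : ℝ≥0∞}
    (hℓ : ∀ y ∈ N, ℓ ≤ μ {x | (x, y) ∈ S}) (hp : ∀ᵐ x ∂μ, ν {y | (x, y) ∈ S} ≤ p) :
    ℓ * ν N ≤ p * μ univ :=
  calc ℓ * ν N ≤ ℓ * ν {y | ℓ ≤ μ {x | (x, y) ∈ S}} := by gcongr; exact hℓ
    _ ≤ ∫⁻ y, μ {x | (x, y) ∈ S} ∂ν :=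
        mul_meas_ge_le_lintegral (measurable_measure_prodMk_right hS) ℓ
    _ = μ.prod ν S := (Measure.prod_apply_symm hS).symm
    _ = ∫⁻ x, ν {y | (x, y) ∈ S} ∂μ := Measure.prod_apply hS
    _ ≤ ∫⁻ _, p ∂μ := lintegral_mono_ae hp
    _ = p * μ univ := lintegral_const p

section ScaledGaussian

lemma pi_withDensity {ι : Type*} [Fintype ι] {α : ι → Type*} [∀ i, MeasurableSpace (α i)]
    {μ : ∀ i, Measure (α i)} [∀ i, IsProbabilityMeasure (μ i)] {r : ∀ i, α i → ℝ≥0∞}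
    (hr : ∀ i, Measurable (r i)) [∀ i, SigmaFinite ((μ i).withDensity (r i))] :
    Measure.pi (fun i ↦ (μ i).withDensity (r i)) =
      (Measure.pi μ).withDensity fun x ↦ ∏ i, r i (x i) := by
  refine Measure.pi_eq fun s hs ↦ ?_
  have hprod (x : ∀ i, α i) : (univ.pi s).indicator (fun x ↦ ∏ i, r i (x i)) x =
      ∏ i, (s i).indicator (r i) (x i) := by
    by_cases hx : x ∈ univ.pi s
    · rw [indicator_of_mem hx]
      exact Finset.prod_congr rfl fun i _ ↦ (indicator_of_mem (hx i trivial) _).symm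
    · rw [indicator_of_notMem hx]
      obtain ⟨i, hi⟩ : ∃ i, x i ∉ s i := by simpa [mem_univ_pi] using hx
      exact (Finset.prod_eq_zero (Finset.mem_univ i) (indicator_of_notMem hi _)).symm
  have hmeas (i : ι) : Measurable ((s i).indicator (r i)) := (hr i).indicator (hs i)
  rw [withDensity_apply _ (.univ_pi hs), ← lintegral_indicator (.univ_pi hs)]
  simp_rw [hprod]
  rw [lintegral_prod_eq_prod_lintegral_of_indepFun Finset.univ _
    (iIndepFun_pi (X := fun i ↦ (s i).indicator (r i)) fun i ↦ (hmeas i).aemeasurable)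
    fun i ↦ (hmeas i).comp (measurable_pi_apply i)]
  refine Finset.prod_congr rfl fun i _ ↦ ?_
  rw [(measurePreserving_eval μ i).lintegral_comp (hmeas i), withDensity_apply _ (hs i),
    lintegral_indicator (hs i)]

lemma gaussianReal_map_exp_mul (u : ℝ) :
    (gaussianReal 0 1).map (Real.exp u * ·) = (gaussianReal 0 1).withDensity fun x ↦
      ENNReal.ofReal (Real.exp (-u + x ^ 2 / 2 * (1 - Real.exp (-2 * u)))) := by
  have hexp : Real.exp (-2 * u) = (Real.exp u ^ 2)⁻¹ := by
    rw [← Real.exp_nat_mul, ← Real.exp_neg]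
    congr 1
    push_cast
    ring
  have hvar : NNReal.mk (Real.exp u ^ 2) (sq_nonneg _) ≠ 0 := fun h ↦
    (pow_pos (Real.exp_pos u) 2).ne' (congrArg NNReal.toReal h)
  rw [gaussianReal_map_const_mul, mul_zero, mul_one, gaussianReal_of_var_ne_zero _ one_ne_zero,
    gaussianReal_of_var_ne_zero _ hvar, ← withDensity_mul _ (by fun_prop) (by fun_prop)]
  congr 1
  ext x
  simp only [Pi.mul_apply, gaussianPDF]
  rw [← ENNReal.ofReal_mul (gaussianPDFReal_nonneg _ _ _)]
  simp only [gaussianPDFReal, NNReal.coe_mk, NNReal.coe_one, mul_one, sub_zero]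
  rw [Real.sqrt_mul (by positivity), Real.sqrt_sq (Real.exp_pos _).le, mul_inv, ← Real.exp_neg,
    mul_assoc, mul_assoc, ← Real.exp_add, ← Real.exp_add, hexp]
  congr 3
  field_simp
  ring

variable {ι : Type*} [Fintype ι]

variable (ι) in
/-- The law of a vector of i.i.d. standard normal variables indexed by `ι`. -/
noncomputable abbrev stdGaussianPi : Measure (ι → ℝ) :=
  Measure.pi fun _ ↦ gaussianReal 0 1

lemma stdGaussianPi_map_exp_smul (u : ℝ) :
    (stdGaussianPi ι).map (Real.exp u • ·) = (stdGaussianPi ι).withDensity fun x ↦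
      ENNReal.ofReal (Real.exp
        (-(Fintype.card ι * u) + (∑ i, x i ^ 2) / 2 * (1 - Real.exp (-2 * u)))) := by
  set r : ℝ → ℝ≥0∞ := fun x ↦
    ENNReal.ofReal (Real.exp (-u + x ^ 2 / 2 * (1 - Real.exp (-2 * u))))
  have hmap : (gaussianReal 0 1).map (Real.exp u * ·) = (gaussianReal 0 1).withDensity r :=
    gaussianReal_map_exp_mul u
  have : IsProbabilityMeasure ((gaussianReal 0 1).withDensity r) := by
    rw [← hmap]
    exact Measure.isProbabilityMeasure_map (by fun_prop)
  calc (stdGaussianPi ι).map (Real.exp u • ·)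
      = Measure.pi fun _ : ι ↦ (gaussianReal 0 1).map (Real.exp u * ·) :=
        Measure.pi_map_pi (f := fun _ y ↦ Real.exp u * y) fun _ ↦ by fun_prop
    _ = (stdGaussianPi ι).withDensity fun x ↦ ∏ i, r (x i) := by
        simp only [hmap]
        exact pi_withDensity fun _ ↦ by fun_prop
    _ = _ := by
        congr with x
        rw [← ENNReal.ofReal_prod_of_nonneg fun _ _ ↦ (Real.exp_pos _).le, ← Real.exp_sum,
          Finset.sum_add_distrib, ← Finset.sum_mul, ← Finset.sum_div]
        simp

lemma stdGaussianPi_exp_smul_mem_le {u C : ℝ} {E : Set (ι → ℝ)} (hE : MeasurableSet E)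
    (hC : ∀ x ∈ E, u * (∑ i, x i ^ 2 - Fintype.card ι) ≤ C) :
    stdGaussianPi ι {x | Real.exp u • x ∈ E} ≤
      ENNReal.ofReal (Real.exp C) * stdGaussianPi ι E := by
  have hdensity : ∀ x ∈ E,
      -(Fintype.card ι * u) + (∑ i, x i ^ 2) / 2 * (1 - Real.exp (-2 * u)) ≤ C := fun x hx ↦ by
    have hsum : 0 ≤ ∑ i, x i ^ 2 := Finset.sum_nonneg fun i _ ↦ sq_nonneg _
    nlinarith [hC x hx, Real.add_one_le_exp (-2 * u)]
  calc stdGaussianPi ι {x | Real.exp u • x ∈ E}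
      = (stdGaussianPi ι).map (Real.exp u • ·) E := (Measure.map_apply (by fun_prop) hE).symm
    _ ≤ ∫⁻ _ in E, ENNReal.ofReal (Real.exp C) ∂stdGaussianPi ι := by
        rw [stdGaussianPi_map_exp_smul, withDensity_apply _ hE]
        refine setLIntegral_mono measurable_const fun x hx ↦ ?_
        gcongr
        exact hdensity x hx
    _ = _ := setLIntegral_const E _

end ScaledGaussian

section SmallBall

variable {ι : Type*} [Fintype ι] {K L : ℝ}

lemma abs_exp_sub_one_le_abs_mul_exp_abs (x : ℝ) : |Real.exp x - 1| ≤ |x| * Real.exp |x| := by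
  have h := Complex.norm_exp_sub_sum_le_norm_mul_exp x 1
  simp only [Finset.sum_range_one, pow_zero, Nat.factorial_zero, Nat.cast_one, div_one, pow_one,
    Complex.norm_real, Real.norm_eq_abs] at h
  exact_mod_cast h

lemma abs_sum_sq_exp_smul_sub_card_le {a : ℝ} {x : ι → ℝ} (ha : |a| ≤ L)
    (hx : |∑ i, x i ^ 2 - Fintype.card ι| ≤ K * √(Fintype.card ι)) :
    |∑ i, (Real.exp (a / √(Fintype.card ι)) • x) i ^ 2 - Fintype.card ι| ≤
      Real.exp (2 * L) * (K + 2 * L) * √(Fintype.card ι) := by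
  set n : ℝ := (Fintype.card ι : ℝ) with hn
  set u := a / √n with hu
  have hL : 0 ≤ L := (abs_nonneg a).trans ha
  have hun : |u| * n ≤ L * √n := by
    rw [hu, abs_div, abs_of_nonneg (Real.sqrt_nonneg n), div_mul_comm, Real.div_sqrt, mul_comm]
    gcongr
  have huL : |2 * u| ≤ 2 * L := by
    rw [abs_mul, abs_two, hu, abs_div, abs_of_nonneg (Real.sqrt_nonneg n)]
    gcongr
    rcases isEmpty_or_nonempty ι with hι | hι
    · simpa [hn] using hL
    · refine (div_le_self (abs_nonneg a) ?_).trans ha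
      exact Real.one_le_sqrt.2 (Nat.one_le_cast.2 Fintype.card_pos)
  have hsum : ∑ i, (Real.exp u • x) i ^ 2 - n =
      Real.exp (2 * u) * (∑ i, x i ^ 2 - n) + n * (Real.exp (2 * u) - 1) := by
    simp only [Pi.smul_apply, smul_eq_mul, mul_pow, ← Finset.mul_sum, ← Real.exp_nat_mul]
    push_cast
    ring
  have hexp : Real.exp (2 * u) ≤ Real.exp (2 * L) := Real.exp_le_exp.2 ((le_abs_self _).trans huL)
  calc |∑ i, (Real.exp u • x) i ^ 2 - n|
      ≤ Real.exp (2 * u) * |∑ i, x i ^ 2 - n| + n * |Real.exp (2 * u) - 1| := by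
        rw [hsum]
        refine (abs_add_le _ _).trans_eq ?_
        rw [abs_mul, abs_mul, Real.abs_exp, Nat.abs_cast]
    _ ≤ Real.exp (2 * L) * (K * √n) + n * (|2 * u| * Real.exp (2 * L)) := by
        gcongr
        exact (abs_exp_sub_one_le_abs_mul_exp_abs _).trans (by gcongr)
    _ = Real.exp (2 * L) * (K * √n + 2 * (|u| * n)) := by
        rw [abs_mul, abs_two]
        ring
    _ ≤ Real.exp (2 * L) * (K * √n + 2 * (L * √n)) := by gcongr
    _ = _ := by ring

lemma ofReal_div_le_volume_abs_exp_mul_sub_lt {r μ t y a L' : ℝ} (hr : 0 < r) (hμ : 0 < μ)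
    (ha : |a| ≤ L) (hay : Real.exp (a / r) * y = r * μ) (hL' : L + t / μ ≤ L') :
    ENNReal.ofReal (t / μ) ≤
      volume.restrict (Icc (-L') L') {b | |Real.exp (b / r) * y - r * μ| < t} := by
  have hsubset : Ioc (a - t / μ) a ⊆
      {b | |Real.exp (b / r) * y - r * μ| < t} ∩ Icc (-L') L' := by
    rintro b ⟨hab, hba⟩
    have hexp : Real.exp (b / r) * y = r * μ * Real.exp ((b - a) / r) := by
      rw [← hay, sub_div, Real.exp_sub]
      field_simp
    have hlower : r * μ - μ * (a - b) ≤ Real.exp (b / r) * y := by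
      calc r * μ - μ * (a - b) = r * μ * ((b - a) / r + 1) := by
            field_simp
            ring
        _ ≤ r * μ * Real.exp ((b - a) / r) := by
            gcongr
            exact Real.add_one_le_exp _
        _ = _ := hexp.symm
    have hupper : Real.exp (b / r) * y ≤ r * μ := by
      rw [hexp]
      refine mul_le_of_le_one_right (by positivity) (Real.exp_le_one_iff.2 ?_)
      exact div_nonpos_of_nonpos_of_nonneg (by linarith) hr.le
    have hμab : μ * (a - b) < t := (lt_div_iff₀' hμ).1 (sub_lt_comm.1 hab)
    have habs : |Real.exp (b / r) * y - r * μ| < t :=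
      abs_lt.2 ⟨by linarith, by linarith [mul_nonneg hμ.le (sub_nonneg.2 hba)]⟩
    exact ⟨habs, by linarith [(abs_le.1 ha).1], by linarith [(abs_le.1 ha).2]⟩
  rw [Measure.restrict_apply (measurableSet_lt (by fun_prop) (by fun_prop))]
  simpa using measure_mono (μ := volume) hsubset

lemma stdGaussianPi_abs_exp_mul_sub_lt_le [Nonempty ι] {g : (ι → ℝ) → ℝ} (hg : Measurable g)
    (hg_smul : ∀ (c : ℝ) (x : ι → ℝ), 0 ≤ c → g (c • x) = c * g x) {N : Set (ι → ℝ)} {b s t : ℝ}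
    (hNK : ∀ x ∈ N, |∑ i, x i ^ 2 - Fintype.card ι| ≤ K * √(Fintype.card ι)) (hb : |b| ≤ L) :
    stdGaussianPi ι {x | x ∈ N ∧ |Real.exp (b / √(Fintype.card ι)) * g x - s| < t} ≤
      ENNReal.ofReal (Real.exp (L * (Real.exp (2 * L) * (K + 2 * L)))) *
        stdGaussianPi ι {x | |g x - s| < t} := by
  set r := √(Fintype.card ι : ℝ)
  have hr : 0 < r := Real.sqrt_pos.2 (Nat.cast_pos.2 Fintype.card_pos)
  set K' := Real.exp (2 * L) * (K + 2 * L)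
  set E := {x : ι → ℝ | |∑ i, x i ^ 2 - Fintype.card ι| ≤ K' * r} ∩ {x | |g x - s| < t}
  have hE : MeasurableSet E :=
    MeasurableSet.inter (measurableSet_le (by fun_prop) (by fun_prop))
      (measurableSet_lt (by fun_prop) (by fun_prop))
  have hshell : ∀ x ∈ E, b / r * (∑ i, x i ^ 2 - Fintype.card ι) ≤ L * K' := fun x hx ↦ by
    refine (le_abs_self _).trans ?_
    calc |b / r * (∑ i, x i ^ 2 - Fintype.card ι)| ≤ L / r * (K' * r) := by
          rw [abs_mul, abs_div, abs_of_pos hr]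
          gcongr
          · exact div_nonneg ((abs_nonneg b).trans hb) hr.le
          · exact hx.1
      _ = L * K' := by field_simp
  refine (measure_mono fun x hx ↦ ?_).trans <|
    (stdGaussianPi_exp_smul_mem_le hE hshell).trans (by gcongr; exact inter_subset_right)
  refine ⟨abs_sum_sq_exp_smul_sub_card_le hb (hNK x hx.1), ?_⟩
  rw [mem_ofPred, hg_smul _ _ (Real.exp_pos _).le]
  exact hx.2

/-- For `x ∈ N` the dilations `exp (b / √n) • x` with `|g (exp (b / √n) • x) - √n * μ| < t` fill a
`b`-interval of length at least `t / μ`, while for each fixed `b` such a dilation changes the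
Gaussian measure on the shell `|∑ i, x i ^ 2 - n| ≤ K * √n` by a bounded factor only. -/
theorem div_mul_stdGaussianPi_real_le [Nonempty ι] {g : (ι → ℝ) → ℝ} (hg : Measurable g)
    (hg_smul : ∀ (c : ℝ) (x : ι → ℝ), 0 ≤ c → g (c • x) = c * g x) {N : Set (ι → ℝ)}
    (hN : MeasurableSet N) {μ t L' : ℝ} (hμ : 0 < μ)
    (hNK : ∀ x ∈ N, |∑ i, x i ^ 2 - Fintype.card ι| ≤ K * √(Fintype.card ι))
    (hNL : ∀ x ∈ N, ∃ a, |a| ≤ L ∧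
      Real.exp (a / √(Fintype.card ι)) * g x = √(Fintype.card ι) * μ)
    (hL' : L + t / μ ≤ L') (hL'0 : 0 ≤ L') :
    t / μ * (stdGaussianPi ι).real N ≤
      Real.exp (L' * (Real.exp (2 * L') * (K + 2 * L'))) *
        (stdGaussianPi ι).real {x | |g x - √(Fintype.card ι) * μ| < t} * (2 * L') := by
  set r := √(Fintype.card ι : ℝ)
  have hr : 0 < r := Real.sqrt_pos.2 (Nat.cast_pos.2 Fintype.card_pos)
  set S := {p : ℝ × (ι → ℝ) | p.2 ∈ N} ∩ {p | |Real.exp (p.1 / r) * g p.2 - r * μ| < t}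
  have hS : MeasurableSet S :=
    (measurable_snd hN).inter (measurableSet_lt (by fun_prop) (by fun_prop))
  have hlength : ∀ x ∈ N,
      ENNReal.ofReal (t / μ) ≤ volume.restrict (Icc (-L') L') {b | (b, x) ∈ S} := fun x hx ↦ by
    obtain ⟨a, ha, hax⟩ := hNL x hx
    simpa only [S, mem_inter_iff, mem_ofPred, hx, true_and] using
      ofReal_div_le_volume_abs_exp_mul_sub_lt hr hμ ha hax hL'
  have hFubini := mul_measure_le_mul_measure_univ_of_sections (ν := stdGaussianPi ι) hS hlength
    (ae_restrict_of_forall_mem measurableSet_Icc fun b hb ↦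
      stdGaussianPi_abs_exp_mul_sub_lt_le hg hg_smul hNK (abs_le.2 hb))
  rw [Measure.restrict_apply_univ, Real.volume_Icc, sub_neg_eq_add, ← two_mul] at hFubini
  have hFubini_real := ENNReal.toReal_mono (by finiteness) hFubini
  simp only [ENNReal.toReal_mul, ENNReal.toReal_ofReal (Real.exp_pos _).le,
    ENNReal.toReal_ofReal (mul_nonneg zero_le_two hL'0), ENNReal.toReal_ofReal'] at hFubini_real
  exact (mul_le_mul_of_nonneg_right (le_max_left _ _) measureReal_nonneg).trans hFubini_real

end SmallBall

section Fluctuation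

variable {δ μ T : ℝ}

lemma abs_log_div_le {s t y : ℝ} (hy : |y - s| < t) (ht : 2 * t ≤ s) :
    |Real.log (s / y)| ≤ 2 * t / s := by
  obtain ⟨hsy, hys⟩ := abs_lt.1 hy
  have hs : 0 < s := by linarith
  have hy0 : 0 < y := by linarith
  rw [abs_le', ← Real.log_inv, inv_div]
  constructor
  · refine (Real.log_le_sub_one_of_pos (by positivity)).trans ?_
    rw [div_sub_one hy0.ne', div_le_div_iff₀ hy0 hs]
    nlinarith
  · refine (Real.log_le_sub_one_of_pos (by positivity)).trans ?_
    rw [div_sub_one hs.ne']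
    gcongr
    linarith

lemma tendsto_sqrt_natCast_mul_atTop (hμ : 0 < μ) :
    Tendsto (fun m : ℕ ↦ √(m : ℝ) * μ) atTop atTop :=
  (Real.tendsto_sqrt_atTop.comp tendsto_natCast_atTop_atTop).atTop_mul_const hμ

lemma exists_forall_measure_lt_abs_sqrt_mul_log_le {Ω : ℕ → Type*} [∀ m, MeasurableSpace (Ω m)]
    {P : ∀ m, Measure (Ω m)} [∀ m, IsFiniteMeasure (P m)] {Y : ∀ m, Ω m → ℝ}
    (hY : ∀ m, Measurable (Y m)) (hμ : 0 < μ) (hδ : 0 < δ)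
    (hP : ∀ᶠ m : ℕ in atTop, (P m).real {ω | T ≤ |Y m ω - √m * μ|} ≤ δ) :
    ∃ L, ∀ m : ℕ, (P m).real {ω | L < |√m * Real.log (√m * μ / Y m ω)|} ≤ δ := by
  have hL₀ : ∀ᶠ m : ℕ in atTop, P m {ω | 2 * T / μ < |√m * Real.log (√m * μ / Y m ω)|} ≤
      ENNReal.ofReal δ := by
    filter_upwards [hP, (tendsto_sqrt_natCast_mul_atTop hμ).eventually_ge_atTop (2 * T),
      eventually_gt_atTop 0] with m hm hTm hm0
    have hr : 0 < √(m : ℝ) := Real.sqrt_pos.2 (Nat.cast_pos.2 hm0)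
    rw [← ENNReal.ofReal_le_ofReal_iff hδ.le, ofReal_measureReal] at hm
    refine (measure_mono fun ω hω ↦ ?_).trans hm
    contrapose! hω
    have hlog := mul_le_mul_of_nonneg_left (abs_log_div_le (not_le.1 hω) hTm) hr.le
    simp only [mem_ofPred, not_lt, abs_mul, abs_of_pos hr]
    exact hlog.trans_eq (by field_simp)
  obtain ⟨L, hL⟩ := exists_forall_measure_lt_abs_le (P := P) (fun m ↦ by fun_prop)
    (ENNReal.ofReal_pos.2 hδ) hL₀
  exact ⟨L, fun m ↦ ENNReal.toReal_le_of_le_ofReal hδ.le (hL m)⟩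

lemma memLp_sq_gaussianReal (a : ℝ) (v : ℝ≥0) : MemLp (fun x ↦ x ^ 2) 2 (gaussianReal a v) := by
  have h := (memLp_id_gaussianReal' (μ := a) (v := v) 4 (by simp)).norm_rpow_div (q := 2)
  rw [show (4 : ℝ≥0∞) / 2 = 2 by
    rw [eq_comm, ENNReal.eq_div_iff] <;> norm_num] at h
  simpa using h

lemma integral_sq_gaussianReal (v : ℝ≥0) : ∫ x, x ^ 2 ∂gaussianReal 0 v = v := by
  have h := variance_fun_id_gaussianReal (μ := 0) (v := v)
  rwa [variance_of_integral_eq_zero (by fun_prop) (by simp)] at h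

lemma exists_forall_stdGaussianPi_lt_abs_sum_sq_sub_card_le (hδ : 0 < δ) :
    ∃ K : ℝ, ∀ (ι : Type*) [Fintype ι] [Nonempty ι],
      (stdGaussianPi ι).real {x | K * √(Fintype.card ι) < |∑ i, x i ^ 2 - Fintype.card ι|} ≤ δ := by
  set V := Var[fun x ↦ x ^ 2; gaussianReal 0 1]
  refine ⟨√(V / δ) + 1, fun ι _ _ ↦ ?_⟩
  have hChebyshev := measureReal_pi_lt_abs_sum_sub_le (ι := ι) (memLp_sq_gaussianReal 0 1)
    (K := √(V / δ) + 1) (by positivity)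
  simp only [integral_sq_gaussianReal, NNReal.coe_one, mul_one] at hChebyshev
  refine hChebyshev.trans ?_
  rw [div_le_comm₀ (by positivity) hδ]
  exact (Real.sqrt_le_left (by positivity)).1 (by linarith)

lemma one_sub_add_le_measureReal_inter {Ω : Type*} [MeasurableSpace Ω] {P : Measure Ω}
    [IsProbabilityMeasure P] {A B : Set Ω} (hA : MeasurableSet A) (hB : MeasurableSet B) :
    1 - (P.real Aᶜ + P.real Bᶜ) ≤ P.real (A ∩ B) := by
  have h := measureReal_union_le (μ := P) Aᶜ Bᶜ
  rw [← compl_inter, probReal_compl_eq_one_sub (hA.inter hB)] at h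
  linarith

lemma le_mul_stdGaussianPi_abs_sub_lt {ι : Type*} [Fintype ι] [Nonempty ι] {g : (ι → ℝ) → ℝ}
    (hg : Measurable g) (hg_smul : ∀ (c : ℝ) (x : ι → ℝ), 0 ≤ c → g (c • x) = c * g x)
    (hg_pos : ∀ᵐ x ∂stdGaussianPi ι, 0 < g x) {K L L' t : ℝ} (hμ : 0 < μ) (ht : 0 ≤ t)
    (hK : (stdGaussianPi ι).real {x | K * √(Fintype.card ι) <
      |∑ i, x i ^ 2 - Fintype.card ι|} ≤ 1 / 4)
    (hL : (stdGaussianPi ι).real {x | L < |√(Fintype.card ι) *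
      Real.log (√(Fintype.card ι) * μ / g x)|} ≤ 1 / 4)
    (hL' : L + t / μ ≤ L') (hL'0 : 0 ≤ L') :
    t ≤ 4 * μ * L' * Real.exp (L' * (Real.exp (2 * L') * (K + 2 * L'))) *
      (stdGaussianPi ι).real {x | |g x - √(Fintype.card ι) * μ| < t} := by
  set r := √(Fintype.card ι : ℝ)
  have hr : 0 < r := Real.sqrt_pos.2 (Nat.cast_pos.2 Fintype.card_pos)
  set A := {x : ι → ℝ | |∑ i, x i ^ 2 - Fintype.card ι| ≤ K * r}
  set B := {x | |r * Real.log (r * μ / g x)| ≤ L}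
  have hA : MeasurableSet A := measurableSet_le (by fun_prop) (by fun_prop)
  have hB : MeasurableSet B := measurableSet_le (by fun_prop) (by fun_prop)
  have hpos : MeasurableSet {x | 0 < g x} := measurableSet_lt (by fun_prop) (by fun_prop)
  have hhalf : 1 / 2 ≤ (stdGaussianPi ι).real (A ∩ B ∩ {x | 0 < g x}) := by
    have hAc : (stdGaussianPi ι).real Aᶜ ≤ 1 / 4 := by simpa only [A, compl_ofPred, not_le] using hK
    have hBc : (stdGaussianPi ι).real Bᶜ ≤ 1 / 4 := by simpa only [B, compl_ofPred, not_le] using hL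
    rw [Measure.real, measure_inter_conull hg_pos, ← Measure.real]
    linarith [one_sub_add_le_measureReal_inter (P := stdGaussianPi ι) hA hB]
  have hcenter : ∀ x ∈ A ∩ B ∩ {x | 0 < g x}, ∃ a, |a| ≤ L ∧ Real.exp (a / r) * g x = r * μ := by
    rintro x ⟨⟨-, hlog⟩, hx⟩
    refine ⟨_, hlog, ?_⟩
    rw [mul_div_cancel_left₀ _ hr.ne', Real.exp_log (div_pos (by positivity) hx),
      div_mul_cancel₀ _ (ne_of_gt hx)]
  have hball := div_mul_stdGaussianPi_real_le hg hg_smul ((hA.inter hB).inter hpos) hμ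
    (fun x hx ↦ hx.1.1) hcenter hL' hL'0
  have hhalf_mul := (mul_le_mul_of_nonneg_left hhalf (div_nonneg ht hμ.le)).trans hball
  rw [mul_one_div, div_div, div_le_iff₀ (by positivity)] at hhalf_mul
  exact hhalf_mul.trans_eq (by ring)

theorem exists_mul_le_stdGaussianPi_abs_sub_lt {g : ∀ m : ℕ, (Fin m → ℝ) → ℝ}
    (hg : ∀ m, Measurable (g m))
    (hg_smul : ∀ m (c : ℝ) (x : Fin m → ℝ), 0 ≤ c → g m (c • x) = c * g m x)
    (hg_pos : ∀ m ≠ 0, ∀ᵐ x ∂stdGaussianPi (Fin m), 0 < g m x) (hμ : 0 < μ)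
    (hgT : ∀ᶠ m : ℕ in atTop,
      (stdGaussianPi (Fin m)).real {x | T ≤ |g m x - √m * μ|} ≤ 1 / 4) :
    ∃ c > 0, ∀ m ≠ 0, ∀ t ∈ Icc 0 T,
      c * t ≤ (stdGaussianPi (Fin m)).real {x | |g m x - √m * μ| < t} := by
  obtain ⟨L, hL⟩ := exists_forall_measure_lt_abs_sqrt_mul_log_le hg hμ (by norm_num) hgT
  obtain ⟨K, hK⟩ :=
    exists_forall_stdGaussianPi_lt_abs_sum_sq_sub_card_le (δ := 1 / 4) (by norm_num)
  set L' := max (L + T / μ) 1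
  set C := 4 * μ * L' * Real.exp (L' * (Real.exp (2 * L') * (K + 2 * L')))
  refine ⟨C⁻¹, by positivity, fun m hm t ⟨ht0, htT⟩ ↦ ?_⟩
  have : NeZero m := ⟨hm⟩
  have hL' : L + t / μ ≤ L' := (by gcongr : L + t / μ ≤ L + T / μ).trans (le_max_left _ _)
  rw [inv_mul_le_iff₀ (by positivity)]
  simpa using le_mul_stdGaussianPi_abs_sub_lt (hg m) (hg_smul m) (hg_pos m hm) hμ ht0
    (hK (Fin m)) (by simpa using hL m) hL' (by positivity)

end Fluctuation

section GaussianConstants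

variable {m : ℝ} {v : ℝ≥0}

lemma gaussianPDFReal_le (m : ℝ) (v : ℝ≥0) (x : ℝ) :
    gaussianPDFReal m v x ≤ (√(2 * Real.pi * v))⁻¹ := by
  refine mul_le_of_le_one_right (by positivity) (Real.exp_le_one_iff.2 ?_)
  exact div_nonpos_of_nonpos_of_nonneg (neg_nonpos.2 (sq_nonneg _)) (by positivity)

lemma gaussianReal_real_Icc {a b : ℝ} (hv : v ≠ 0) (hab : a ≤ b) :
    (gaussianReal m v).real (Icc a b) = ∫ x in a..b, gaussianPDFReal m v x := by
  rw [Measure.real, gaussianReal_apply_eq_integral _ hv, ENNReal.toReal_ofReal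
    (integral_nonneg fun x ↦ gaussianPDFReal_nonneg _ _ _), intervalIntegral.integral_of_le hab,
    integral_Icc_eq_integral_Ioc]

lemma gaussianReal_real_Icc_le {a b : ℝ} (hv : v ≠ 0) (hab : a ≤ b) :
    (gaussianReal m v).real (Icc a b) ≤ (b - a) / √(2 * Real.pi * v) := by
  rw [gaussianReal_real_Icc hv hab, div_eq_inv_mul, ← abs_of_nonneg (sub_nonneg.2 hab)]
  refine (Real.le_norm_self _).trans <|
    intervalIntegral.norm_integral_le_of_norm_le_const fun x _ ↦ ?_
  rw [Real.norm_of_nonneg (gaussianPDFReal_nonneg _ _ _)]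
  exact gaussianPDFReal_le m v x

lemma exists_gaussianReal_real_Icc_neg_eq {p Q : ℝ} (hv : v ≠ 0) (hp : 0 < p) (hQ : 0 ≤ Q)
    (hpQ : p ≤ (gaussianReal m v).real (Icc (-Q) Q)) :
    ∃ q ∈ Ioc 0 Q, (gaussianReal m v).real (Icc (-q) q) = p := by
  have hint (a b : ℝ) : IntervalIntegrable (gaussianPDFReal m v) volume a b :=
    (integrable_gaussianPDFReal m v).intervalIntegrable
  have hcont : Continuous fun q : ℝ ↦ ∫ x in (-q)..q, gaussianPDFReal m v x := by
    have hprimitive := intervalIntegral.continuous_primitive hint 0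
    refine (hprimitive.sub (hprimitive.comp continuous_neg)).congr fun q ↦ ?_
    exact intervalIntegral.integral_interval_sub_left (hint _ _) (hint _ _)
  have hmem : p ∈ Icc (∫ x in (-0 : ℝ)..0, gaussianPDFReal m v x)
      (∫ x in (-Q)..Q, gaussianPDFReal m v x) := by
    rw [neg_zero, intervalIntegral.integral_same, ← gaussianReal_real_Icc hv (by linarith)]
    exact ⟨hp.le, hpQ⟩
  obtain ⟨q, ⟨hq0, hqQ⟩, hq⟩ := intermediate_value_Icc hQ hcont.continuousOn hmem
  have hq0' : q ≠ 0 := by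
    rintro rfl
    simp only [neg_zero, intervalIntegral.integral_same] at hq
    exact hp.ne hq
  refine ⟨q, ⟨hq0.lt_of_ne' hq0', hqQ⟩, ?_⟩
  rwa [gaussianReal_real_Icc hv (by linarith)]

lemma three_fourths_le_gaussianReal_real_Icc :
    3 / 4 ≤ (gaussianReal 0 1).real (Icc (-2) 2) := by
  have hChebyshev := meas_ge_le_variance_div_sq (memLp_id_gaussianReal (μ := 0) (v := 1) 2)
    zero_lt_two
  simp only [id_eq, integral_id_gaussianReal, variance_id_gaussianReal, NNReal.coe_one,
    sub_zero] at hChebyshev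
  have hsubset : (Icc (-2) 2)ᶜ ⊆ {x : ℝ | 2 ≤ |x|} := fun x hx ↦ by
    contrapose! hx
    simpa [← abs_le] using (not_le.1 hx).le
  have hcompl := ENNReal.toReal_le_of_le_ofReal (by norm_num)
    ((measure_mono hsubset).trans hChebyshev)
  rw [← Measure.real, probReal_compl_eq_one_sub measurableSet_Icc] at hcompl
  linarith

lemma sq_mul_sub_le_setIntegral_Icc_sq (ν : Measure ℝ) [IsFiniteMeasure ν] {a : ℝ} (ha : 0 ≤ a)
    (q : ℝ) :
    a ^ 2 * (ν.real (Icc (-q) q) - ν.real (Icc (-a) a)) ≤ ∫ y in Icc (-q) q, y ^ 2 ∂ν := by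
  have hint : IntegrableOn (fun y : ℝ ↦ y ^ 2) (Icc (-q) q) ν :=
    ContinuousOn.integrableOn_Icc (by fun_prop)
  calc a ^ 2 * (ν.real (Icc (-q) q) - ν.real (Icc (-a) a))
      ≤ a ^ 2 * ν.real (Icc (-q) q \ Icc (-a) a) := by gcongr; exact le_measureReal_sdiff
    _ ≤ ∫ y in Icc (-q) q \ Icc (-a) a, y ^ 2 ∂ν := by
        refine setIntegral_ge_of_const_le_real (measurableSet_Icc.diff measurableSet_Icc)
          (measure_ne_top _ _) (fun y hy ↦ ?_) (hint.mono_set sdiff_subset)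
        rw [sq_le_sq, abs_of_nonneg ha]
        exact (not_le.1 (mt abs_le.1 hy.2)).le
    _ ≤ ∫ y in Icc (-q) q, y ^ 2 ∂ν :=
        setIntegral_mono_set hint (.of_forall fun y ↦ sq_nonneg y) sdiff_subset.eventuallyLE

lemma sq_le_setIntegral_Icc_sq_gaussianReal {q : ℝ}
    (hq : 1 / 2 ≤ (gaussianReal 0 1).real (Icc (-q) q)) :
    (1 / 18 * √(Real.pi / 2)) ^ 2 ≤ ∫ y in Icc (-q) q, y ^ 2 ∂gaussianReal 0 1 := by
  set a := 1 / 3 * √(Real.pi / 2) with ha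
  have ha0 : 0 ≤ a := by positivity
  have hsmall : (gaussianReal 0 1).real (Icc (-a) a) ≤ 1 / 3 := by
    refine (gaussianReal_real_Icc_le one_ne_zero (by linarith)).trans_eq ?_
    have hsqrt : √(2 * Real.pi * (1 : ℝ≥0)) = 2 * √(Real.pi / 2) := by
      rw [NNReal.coe_one, mul_one, show 2 * Real.pi = 2 ^ 2 * (Real.pi / 2) by ring,
        Real.sqrt_mul (by positivity), Real.sqrt_sq zero_le_two]
    rw [hsqrt, ha]
    field_simp
    norm_num
  calc (1 / 18 * √(Real.pi / 2)) ^ 2 = a ^ 2 * (1 / 36) := by rw [ha]; ring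
    _ ≤ a ^ 2 * ((gaussianReal 0 1).real (Icc (-q) q) - (gaussianReal 0 1).real (Icc (-a) a)) := by
        gcongr
        linarith
    _ ≤ _ := sq_mul_sub_le_setIntegral_Icc_sq _ ha0 q

end GaussianConstants

section HalfNormConcentration

variable {μ q Q : ℝ}

lemma ae_pi_halfNorm_pos {ι : Type*} [Fintype ι] [Nonempty ι] (ν : Measure ℝ) [SigmaFinite ν]
    [NullSingletonClass ν] : ∀ᵐ x ∂Measure.pi fun _ : ι ↦ ν, 0 < halfNorm x := by
  have hne : ∀ᵐ x ∂Measure.pi fun _ : ι ↦ ν, ∀ i, x i ≠ 0 :=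
    ae_all_iff.2 fun i ↦ Measure.ae_eval_ne (fun _ ↦ ν) i 0
  filter_upwards [hne] with x hx using halfNorm_pos hx

theorem exists_forall_measureReal_pi_le_abs_halfNorm_sub_le {ν : Measure ℝ}
    [IsProbabilityMeasure ν] (hq : 0 < q) (hqQ : q ≤ Q) (hνq : ν.real (Icc (-q) q) = 1 / 2)
    (hνQ : 3 / 4 ≤ ν.real (Icc (-Q) Q)) (hμ : ∫ y in Icc (-q) q, y ^ 2 ∂ν = μ ^ 2) (hμ0 : 0 < μ) :
    ∃ d > 0, ∃ T > 0, ∀ t ≥ T, Real.exp (-(d * t ^ 2)) ≤ 1 / 4 ∧ ∀ m : ℕ, t ≤ √m * μ →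
      (Measure.pi fun _ : Fin m ↦ ν).real {x | t ≤ |halfNorm x - √m * μ|} ≤
        Real.exp (-(d * t ^ 2)) := by
  have hQ : 0 < Q := hq.trans_le hqQ
  set d := μ ^ 2 / (4 * Q ^ 4)
  have hd : 0 < d := by positivity
  have hsmall : ∀ᶠ t in atTop, Real.exp (-(d * t ^ 2)) ≤ 1 / 4 := by
    have htop : Tendsto (fun t : ℝ ↦ d * t ^ 2) atTop atTop :=
      (tendsto_pow_atTop two_ne_zero).const_mul_atTop hd
    exact (Real.tendsto_exp_neg_atTop_nhds_zero.comp htop).eventually_le_const (by norm_num)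
  obtain ⟨T₀, hT₀⟩ := eventually_atTop.1 hsmall
  refine ⟨d, hd, max T₀ (Q ^ 2 / (2 * μ)), by positivity, fun t ht ↦ ?_⟩
  obtain ⟨htT₀, htQ⟩ := max_le_iff.1 ht
  have hquarter := hT₀ t htT₀
  refine ⟨hquarter, fun m htm ↦ ?_⟩
  have ht0 : 0 < t := lt_of_lt_of_le (by positivity) htQ
  have hm : 1 ≤ √(m : ℝ) := by
    rw [Real.one_le_sqrt, Nat.one_le_cast, Nat.one_le_iff_ne_zero]
    rintro rfl
    simp at htm
    linarith
  have htQ' : Q ^ 2 ≤ 2 * √m * μ * t := by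
    rw [div_le_iff₀ (by positivity)] at htQ
    nlinarith [mul_pos hμ0 ht0]
  have htail := measureReal_pi_le_abs_halfNorm_sub_le (ι := Fin m) hq hqQ hνq hνQ hμ hμ0
    (by simpa using htQ') (by simpa using htm)
  rw [Fintype.card_fin] at htail
  refine htail.trans ?_
  have hexp : Real.exp (-(μ ^ 2 / (2 * Q ^ 4) * t ^ 2)) = Real.exp (-(d * t ^ 2)) ^ 2 := by
    rw [← Real.exp_nat_mul]
    congr 1
    simp only [d]
    field_simp
    norm_num
  rw [hexp]
  nlinarith [Real.exp_pos (-(d * t ^ 2))]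

theorem exists_one_sub_exp_le_stdGaussianPi_abs_halfNorm_sub_lt (hq : 0 < q) (hqQ : q ≤ Q)
    (hνq : (gaussianReal 0 1).real (Icc (-q) q) = 1 / 2)
    (hνQ : 3 / 4 ≤ (gaussianReal 0 1).real (Icc (-Q) Q))
    (hμ : ∫ y in Icc (-q) q, y ^ 2 ∂gaussianReal 0 1 = μ ^ 2) (hμ0 : 0 < μ) :
    ∃ c > 0, ∀ m : ℕ, ∀ t ∈ Icc 0 (√m * μ), 1 - Real.exp (-(c * t ^ 2)) ≤
      (stdGaussianPi (Fin m)).real {x | |halfNorm x - √m * μ| < t} := by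
  obtain ⟨d, hd, T, hT, htail⟩ :=
    exists_forall_measureReal_pi_le_abs_halfNorm_sub_le hq hqQ hνq hνQ hμ hμ0
  have := nullSingletonClass_gaussianReal (μ := 0) (v := 1) one_ne_zero
  obtain ⟨c, hc, hball⟩ := exists_mul_le_stdGaussianPi_abs_sub_lt (g := fun m ↦ halfNorm) (T := T)
    (fun m ↦ measurable_halfNorm) (fun m c x hc ↦ halfNorm_smul hc x)
    (fun m hm ↦ have : NeZero m := ⟨hm⟩; ae_pi_halfNorm_pos _) hμ0 (by
      filter_upwards [(tendsto_sqrt_natCast_mul_atTop hμ0).eventually_ge_atTop T] with m hm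
      exact ((htail T le_rfl).2 m hm).trans (htail T le_rfl).1)
  refine ⟨min d (c / T), by positivity, fun m t ⟨ht0, htm⟩ ↦ ?_⟩
  rcases le_total T t with hTt | htT
  · have hcompl := (htail t hTt).2 m htm
    have hmeas : MeasurableSet {x : Fin m → ℝ | |halfNorm x - √m * μ| < t} :=
      measurableSet_lt (by fun_prop) (by fun_prop)
    simp only [← not_lt, ← compl_ofPred] at hcompl
    rw [probReal_compl_eq_one_sub hmeas] at hcompl
    have hexp : Real.exp (-(d * t ^ 2)) ≤ Real.exp (-(min d (c / T) * t ^ 2)) := by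
      gcongr
      exact min_le_left _ _
    linarith
  · rcases eq_or_ne m 0 with rfl | hm
    · have ht : t = 0 := le_antisymm (by simpa using htm) ht0
      simp [ht]
    calc 1 - Real.exp (-(min d (c / T) * t ^ 2)) ≤ min d (c / T) * t ^ 2 := by
          linarith [Real.add_one_le_exp (-(min d (c / T) * t ^ 2))]
      _ ≤ c / T * (T * t) := by
          rw [sq]
          gcongr
          exact min_le_right _ _
      _ = c * t := by field_simp
      _ ≤ _ := hball m hm t ⟨ht0, htT⟩

theorem exists_forall_one_sub_exp_le_stdGaussianPi_abs_halfNorm_sub_lt :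
    ∃ μ : ℝ, 1 / 18 * √(Real.pi / 2) ≤ μ ∧ ∃ c > 0, ∀ m : ℕ, ∀ t ∈ Icc 0 (√m * μ),
      1 - Real.exp (-(c * t ^ 2)) ≤
        (stdGaussianPi (Fin m)).real {x | |halfNorm x - √m * μ| < t} := by
  have hν2 := three_fourths_le_gaussianReal_real_Icc
  obtain ⟨q, ⟨hq0, hq2⟩, hνq⟩ := exists_gaussianReal_real_Icc_neg_eq (m := 0) (v := 1) (p := 1 / 2)
    one_ne_zero (by norm_num) zero_le_two (by linarith)
  set V := ∫ y in Icc (-q) q, y ^ 2 ∂gaussianReal 0 1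
  have hV : (1 / 18 * √(Real.pi / 2)) ^ 2 ≤ V := sq_le_setIntegral_Icc_sq_gaussianReal hνq.ge
  have hμ : 1 / 18 * √(Real.pi / 2) ≤ √V := Real.le_sqrt_of_sq_le hV
  have hμ0 : 0 < √V := lt_of_lt_of_le (by positivity) hμ
  exact ⟨√V, hμ, exists_one_sub_exp_le_stdGaussianPi_abs_halfNorm_sub_lt hq0 hq2 hνq hν2
    (Real.sq_sqrt ((sq_nonneg _).trans hV)).symm hμ0⟩

end HalfNormConcentration

/-- For i.i.d. standard normals `X₁,…,X_m`, there exist a constant `μ ≥ (1/18)√(π/2)`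
and a universal `c > 0` such that for every `0 ≤ ε ≤ μ`, with probability at least
`1 − e^{−c m ε²}`:
`√m (μ − ε) < (∑_{i=1}^{⌈m/2⌉} |X|_{(i)}²)^{1/2} < √m (μ + ε)`, where the sum is over
the `⌈m/2⌉` smallest of the squared absolute values.  Equivalently (as stated here),
every subset of `⌈m/2⌉` coordinates has squared sum exceeding `m(μ − ε)²`, and some
subset of `⌈m/2⌉` coordinates has square-rooted sum below `√m (μ + ε)`. -/
theorem stmt_4 :
    ∃ μ c : ℝ, (1 / 18) * Real.sqrt (Real.pi / 2) ≤ μ ∧ 0 < c ∧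
      ∀ (m : ℕ) (Ω : Type) [MeasurableSpace Ω] (P : Measure Ω),
        IsProbabilityMeasure P →
        ∀ X : Ω → Fin m → ℝ, Measurable X → IIDStdGaussianVec P m X →
        ∀ ε : ℝ, 0 ≤ ε → ε ≤ μ →
        P {ω |
            (∀ I : Finset (Fin m), I.card = (m + 1) / 2 →
              Real.sqrt m * (μ - ε) < Real.sqrt (∑ i ∈ I, (X ω i) ^ 2)) ∧
            (∃ I : Finset (Fin m), I.card = (m + 1) / 2 ∧
              Real.sqrt (∑ i ∈ I, (X ω i) ^ 2) < Real.sqrt m * (μ + ε))} ≥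
          ENNReal.ofReal (1 - Real.exp (-c * m * ε ^ 2)) := by
  obtain ⟨μ, hμ, c, hc, hconc⟩ := exists_forall_one_sub_exp_le_stdGaussianPi_abs_halfNorm_sub_lt
  refine ⟨μ, c, hμ, hc, fun m Ω _ P _ X hX hlaw ε hε hεμ ↦ ?_⟩
  have hmeas : MeasurableSet {x : Fin m → ℝ | |halfNorm x - √m * μ| < √m * ε} :=
    measurableSet_lt (by fun_prop) (by fun_prop)
  have hlaw : Measure.map X P = stdGaussianPi (Fin m) := hlaw
  have hexp : -c * m * ε ^ 2 = -(c * (√m * ε) ^ 2) := by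
    rw [mul_pow, Real.sq_sqrt m.cast_nonneg]
    ring
  calc ENNReal.ofReal (1 - Real.exp (-c * m * ε ^ 2))
      ≤ stdGaussianPi (Fin m) {x | |halfNorm x - √m * μ| < √m * ε} := by
        rw [hexp, ENNReal.ofReal_le_iff_le_toReal (measure_ne_top _ _)]
        exact hconc m _ ⟨by positivity, by gcongr⟩
    _ = P {ω | |halfNorm (X ω) - √m * μ| < √m * ε} := by
        rw [← hlaw, Measure.map_apply hX hmeas, preimage_ofPred_eq]
    _ ≤ _ := measure_mono fun ω hω ↦ by
        obtain ⟨hlower, hupper⟩ := abs_lt.1 (mem_ofPred.1 hω)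
        have hlt : √m * (μ - ε) < halfNorm (X ω) ∧ halfNorm (X ω) < √m * (μ + ε) :=
          ⟨by linarith, by linarith⟩
        simpa only [mem_ofPred, lt_halfNorm_iff, halfNorm_lt_iff, Fintype.card_fin] using hlt
end
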